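/- Newton potential gradient estimate, base case: let θ ∈ (1,d), p > 1. For f ∈ C₀^∞(ℝ^d) let u(x) = ∫ ∇Γ(x−y) f(y) dy where Γ is the Newtonian potential kernel. Then there is C independent of f such that ‖w^{θ−d/p−1} u‖_{L_p} + ‖w^{θ−d/p} ∇u‖_{L_p} ≤ C ‖w^{θ−d/p} f‖_{L_p}, where w(x) = (1+|x|²)^{1/2}. -/

import Mathlib

open MeasureTheory

/-!
The field `u = ∇Γ ∗ f` has divergence `f` and a symmetric derivative, so `∇u` is controlled by a
div-curl estimate, which here takes the place of Calderón-Zygmund theory with Muckenhoupt weights.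

The unweighted estimate `‖∂ᵢ Uⱼ‖ₚ ≲ ∑ₖ ‖∂ₖ Uⱼ - ∂ⱼ Uₖ‖ₚ + ‖div U‖ₚ` for compactly supported `C¹`
fields is the limit of a discrete one. Let `P` be the transition operator of the lazy random walk
with `2 n` steps `± v k`, so that `4 n (1 - P)` is minus the discrete Laplacian, whose value at a
difference of `Uⱼ` is a sum of differences of the discrete curl and divergence. Pairing with a test
function and telescoping along the flow `Pᵐ` leaves sums `n⁻¹ ∑ₘ ∫ |δ Pᵐ f| |δ Pᵐ g|` of products
of differences. A Bellman function whose convexity gap dominates such products decreases along the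
flow, which bounds these sums by `‖f‖ₚ ‖g‖_q` with a constant depending neither on the steps nor on
their number, so the steps can be sent to `0`.

Applied to `U = ζ u`, with `ζ` a cutoff of `⟨x⟩ᵃ` and `a = θ - d / p`, the estimate produces
commutators of size `⟨x⟩^(a - 1) |u|`. Since `|u|` is dominated by the potential of `|f|` with
kernel `|x - y|^(1 - d)`, a Schur test against powers of `⟨x⟩` bounds them in `Lᵖ` by `⟨x⟩ᵃ f`; the
test requires exactly `1 < θ < d`.
-/

open Filter
open scoped Topology ENNReal NNReal CompactlySupported

section SecondOrderTaylor

lemma mul_sub_le_sub_of_hasDerivAt_ge {f f' : ℝ → ℝ} {a b c : ℝ} (hab : a ≤ b)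
    (hf : ∀ s ∈ Set.Icc a b, HasDerivAt f (f' s) s) (hc : ∀ s ∈ Set.Icc a b, c ≤ f' s) :
    c * (b - a) ≤ f b - f a :=
  (convex_Icc a b).mul_sub_le_image_sub_of_le_deriv
    (fun s hs => (hf s hs).continuousAt.continuousWithinAt)
    (fun s hs => (hf s (interior_subset hs)).differentiableAt.differentiableWithinAt)
    (fun s hs => (hf s (interior_subset hs)).deriv ▸ hc s (interior_subset hs))
    a (Set.left_mem_Icc.2 hab) b (Set.right_mem_Icc.2 hab) hab

lemma div_eight_le_taylor_remainder {f f' f'' : ℝ → ℝ} {m : ℝ}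
    (hf : ∀ s ∈ Set.Icc (0 : ℝ) 1, HasDerivAt f (f' s) s)
    (hf' : ∀ s ∈ Set.Icc (0 : ℝ) 1, HasDerivAt f' (f'' s) s)
    (hnonneg : ∀ s ∈ Set.Icc (0 : ℝ) 1, 0 ≤ f'' s)
    (hm : ∀ s ∈ Set.Icc (1 / 4 : ℝ) (1 / 2), m ≤ f'' s) :
    m / 8 ≤ f 1 - f 0 - f' 0 := by
  have sub : ∀ {a b : ℝ}, 0 ≤ a → b ≤ 1 → ∀ s ∈ Set.Icc a b, s ∈ Set.Icc (0 : ℝ) 1 :=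
    fun ha hb _ hs => ⟨ha.trans hs.1, hs.2.trans hb⟩
  have slope_mono : ∀ a b, 0 ≤ a → a ≤ b → b ≤ 1 → f' a ≤ f' b := fun a b ha hab hb => by
    have := mul_sub_le_sub_of_hasDerivAt_ge hab (fun s hs => hf' s (sub ha hb s hs))
      (fun s hs => hnonneg s (sub ha hb s hs))
    linarith
  have slope_gain : m * (1 / 2 - 1 / 4) ≤ f' (1 / 2) - f' (1 / 4) :=
    mul_sub_le_sub_of_hasDerivAt_ge (by norm_num)
      (fun s hs => hf' s (sub (by norm_num) (by norm_num) s hs)) hm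
  have first_half : f' 0 * (1 / 2 - 0) ≤ f (1 / 2) - f 0 :=
    mul_sub_le_sub_of_hasDerivAt_ge (by norm_num)
      (fun s hs => hf s (sub le_rfl (by norm_num) s hs))
      (fun s hs => slope_mono 0 s le_rfl hs.1 (by linarith [hs.2]))
  have second_half : f' (1 / 2) * (1 - 1 / 2) ≤ f 1 - f (1 / 2) :=
    mul_sub_le_sub_of_hasDerivAt_ge (by norm_num)
      (fun s hs => hf s (sub (by norm_num) le_rfl s hs))
      (fun s hs => slope_mono (1 / 2) s (by norm_num) hs.1 hs.2)
  have := slope_mono 0 (1 / 4) le_rfl (by norm_num) (by norm_num)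
  linarith

end SecondOrderTaylor

section Bellman

variable {p q : ℝ}

lemma sub_one_mul_sub_one_of_holderConjugate (hpq : p.HolderConjugate q) :
    (p - 1) * (q - 1) = 1 := by
  linear_combination hpq.mul_eq_add

lemma sub_one_mul_two_sub_of_holderConjugate (hpq : p.HolderConjugate q) :
    (p - 1) * (2 - q) = p - 2 := by
  linear_combination -hpq.mul_eq_add

lemma le_two_of_holderConjugate (hpq : p.HolderConjugate q) (hp : 2 ≤ p) : q ≤ 2 := by
  nlinarith [sub_one_mul_two_sub_of_holderConjugate hpq, hpq.sub_one_pos]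

/-- A smooth Bellman function for the bilinear embedding on `Lᵖ × L^q`, `2 ≤ p`, on the open
positive quadrant: it has size `xᵖ + y^q`, and its Hessian controls `|ξ| |η|`. -/
noncomputable def bellman (p q x y : ℝ) : ℝ :=
  x ^ 2 * (x ^ (p - 1) + y) ^ (2 - q) + 6 / (q * (q - 1)) * y ^ q

/-- The partial derivative of `bellman` in its first variable. -/
noncomputable def bellmanDx (p q x y : ℝ) : ℝ :=
  2 * x * (x ^ (p - 1) + y) ^ (2 - q) + (p - 2) * x ^ p * (x ^ (p - 1) + y) ^ (1 - q)

/-- The partial derivative of `bellman` in its second variable. -/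
noncomputable def bellmanDy (p q x y : ℝ) : ℝ :=
  (2 - q) * x ^ 2 * (x ^ (p - 1) + y) ^ (1 - q) + 6 / (q - 1) * y ^ (q - 1)

/-- The Hessian quadratic form of `bellman` at `(x, y)`, evaluated at `(ξ, η)`. -/
noncomputable def bellmanHess (p q x y ξ η : ℝ) : ℝ :=
  let N := x ^ (p - 1) + y
  let k := x ^ (p - 1) / N
  let e := x * η / N
  N ^ (2 - q) * ((2 + (p - 2) * (p + 2) * k - (p - 2) * k ^ 2) * ξ ^ 2
    + (2 - q) * (4 - 2 * k) * (ξ * e) - (2 - q) * (q - 1) * e ^ 2) + 6 * (y ^ (q - 2) * η ^ 2)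

lemma hasDerivAt_rpow_add {X Y : ℝ → ℝ} {ξ η s : ℝ}
    (hX : HasDerivAt X ξ s) (hY : HasDerivAt Y η s) (hX0 : 0 < X s) (hY0 : 0 < Y s) (r : ℝ) :
    HasDerivAt (fun t => (X t ^ (p - 1) + Y t) ^ r)
      (r * (X s ^ (p - 1) + Y s) ^ (r - 1) * ((p - 1) * X s ^ (p - 2) * ξ + η)) s := by
  have hN : X s ^ (p - 1) + Y s ≠ 0 := by positivity
  refine (((hX.rpow_const (Or.inl hX0.ne')).add hY).rpow_const (Or.inl hN)).congr_deriv ?_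
  simp only [Pi.add_apply]
  rw [show p - 1 - 1 = p - 2 by ring]
  ring

lemma hasDerivAt_bellman (hpq : p.HolderConjugate q) {X Y : ℝ → ℝ} {ξ η s : ℝ}
    (hX : HasDerivAt X ξ s) (hY : HasDerivAt Y η s) (hX0 : 0 < X s) (hY0 : 0 < Y s) :
    HasDerivAt (fun t => bellman p q (X t) (Y t))
      (bellmanDx p q (X s) (Y s) * ξ + bellmanDy p q (X s) (Y s) * η) s := by
  have hq0 := hpq.symm.ne_zero
  have hq1 := hpq.symm.sub_one_ne_zero
  have hpow : X s ^ p = X s ^ (p - 2) * X s ^ 2 := by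
    rw [← Real.rpow_natCast, ← Real.rpow_add hX0]; norm_num
  refine (((hX.pow 2).mul (hasDerivAt_rpow_add hX hY hX0 hY0 (2 - q))).add
    ((hY.rpow_const (p := q) (Or.inl hY0.ne')).const_mul (6 / (q * (q - 1))))).congr_deriv ?_
  rw [bellmanDx, bellmanDy, hpow, show 2 - q - 1 = 1 - q by ring,
    ← sub_one_mul_two_sub_of_holderConjugate hpq]
  simp only [Pi.pow_apply, Nat.cast_ofNat, Nat.add_one_sub_one, pow_one]
  field_simp
  ring

lemma hasDerivAt_bellman_deriv (hpq : p.HolderConjugate q) {X Y : ℝ → ℝ} {ξ η s : ℝ}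
    (hX : HasDerivAt X ξ s) (hY : HasDerivAt Y η s) (hX0 : 0 < X s) (hY0 : 0 < Y s) :
    HasDerivAt (fun t => bellmanDx p q (X t) (Y t) * ξ + bellmanDy p q (X t) (Y t) * η)
      (bellmanHess p q (X s) (Y s) ξ η) s := by
  have hp1 := hpq.sub_one_ne_zero
  have hN0 : 0 < X s ^ (p - 1) + Y s := by positivity
  have dN := hasDerivAt_rpow_add (p := p) hX hY hX0 hY0
  have dx := ((hX.const_mul 2).mul (dN (2 - q))).add
    (((hX.rpow_const (p := p) (Or.inl hX0.ne')).const_mul (p - 2)).mul (dN (1 - q)))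
  have dy := (((hX.pow 2).const_mul (2 - q)).mul (dN (1 - q))).add
    ((hY.rpow_const (p := q - 1) (Or.inl hY0.ne')).const_mul (6 / (q - 1)))
  refine ((dx.mul_const ξ).add (dy.mul_const η)).congr_deriv ?_
  have hN1 : (X s ^ (p - 1) + Y s) ^ (1 - q) =
      (X s ^ (p - 1) + Y s) ^ (2 - q) / (X s ^ (p - 1) + Y s) := by
    rw [← Real.rpow_sub_one hN0.ne']; ring_nf
  have hN2 : (X s ^ (p - 1) + Y s) ^ (-q) =
      (X s ^ (p - 1) + Y s) ^ (2 - q) / (X s ^ (p - 1) + Y s) ^ 2 := by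
    rw [← Real.rpow_sub_natCast hN0.ne']; norm_num
  have hX1 : X s ^ p = X s ^ (p - 1) * X s := by rw [← Real.rpow_add_one hX0.ne']; ring_nf
  have hX2 : X s ^ (p - 2) = X s ^ (p - 1) / X s := by rw [← Real.rpow_sub_one hX0.ne']; ring_nf
  simp only [bellmanHess, Pi.pow_apply, Nat.cast_ofNat, Nat.add_one_sub_one, pow_one]
  rw [show 2 - q - 1 = 1 - q by ring, show 1 - q - 1 = -q by ring, show q - 1 - 1 = q - 2 by ring,
    hN1, hN2, hX1, hX2]
  have hX0' := hX0.ne'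
  have hN0' := hN0.ne'
  generalize (X s ^ (p - 1) + Y s) ^ (2 - q) = M
  generalize Y s ^ (q - 2) = W
  generalize X s ^ (p - 1) + Y s = N at hN0'
  generalize X s ^ (p - 1) = V
  have hq1 : q - 1 = 1 / (p - 1) := by rw [hpq.conjugate_eq]; field_simp; ring
  rw [show 2 - q = 1 - (q - 1) by ring, show 1 - q = -(q - 1) by ring, hq1]
  field_simp
  ring

lemma le_rpow_add_sub_one (hpq : p.HolderConjugate q) {x y : ℝ} (hx : 0 ≤ x) (hy : 0 ≤ y) :
    x ≤ (x ^ (p - 1) + y) ^ (q - 1) :=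
  calc x = (x ^ (p - 1)) ^ (q - 1) := by
        rw [← Real.rpow_mul hx, sub_one_mul_sub_one_of_holderConjugate hpq, Real.rpow_one]
    _ ≤ (x ^ (p - 1) + y) ^ (q - 1) := by
        have := hpq.symm.sub_one_pos.le
        gcongr
        linarith

lemma rpow_mul_div_sq_le (hpq : p.HolderConjugate q) (hp : 2 ≤ p) {x y : ℝ} (hx : 0 < x)
    (hy : 0 < y) :
    (x ^ (p - 1) + y) ^ (2 - q) * (x / (x ^ (p - 1) + y)) ^ 2 ≤ y ^ (q - 2) := by
  have hxN := le_rpow_add_sub_one hpq hx.le hy.le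
  have hyN : y ≤ x ^ (p - 1) + y := le_add_of_nonneg_left (by positivity)
  have hN : 0 < x ^ (p - 1) + y := by positivity
  set N := x ^ (p - 1) + y
  calc N ^ (2 - q) * (x / N) ^ 2 ≤ N ^ (2 - q) * (N ^ (q - 1) / N) ^ 2 := by gcongr
    _ = N ^ (q - 2) := by
        rw [← Real.rpow_sub_one hN.ne', ← Real.rpow_natCast, ← Real.rpow_mul hN.le,
          ← Real.rpow_add hN]
        congr 1; push_cast; ring
    _ ≤ y ^ (q - 2) :=
        Real.rpow_le_rpow_of_nonpos hy hyN (by linarith [le_two_of_holderConjugate hpq hp])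

lemma sq_sub_five_mul_sq_le {k : ℝ} (hp : 2 ≤ p) (hq1 : 1 < q) (hq2 : q ≤ 2) (hk0 : 0 ≤ k)
    (hk1 : k ≤ 1) (ξ e : ℝ) :
    ξ ^ 2 - 5 * e ^ 2 ≤ (2 + (p - 2) * (p + 2) * k - (p - 2) * k ^ 2) * ξ ^ 2
      + (2 - q) * (4 - 2 * k) * (ξ * e) - (2 - q) * (q - 1) * e ^ 2 := by
  have square_coeff : 0 ≤ (p - 2) * k * (p + 2 - k) * ξ ^ 2 :=
    mul_nonneg (mul_nonneg (mul_nonneg (by linarith) hk0) (by linarith)) (sq_nonneg ξ)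
  have cross_coeff : |(2 - q) * (4 - 2 * k)| ≤ 4 := by
    rw [abs_of_nonneg (mul_nonneg (by linarith) (by linarith))]
    nlinarith
  have cross : -(ξ ^ 2 + 4 * e ^ 2) ≤ (2 - q) * (4 - 2 * k) * (ξ * e) := by
    have h : |(2 - q) * (4 - 2 * k)| * |ξ * e| ≤ 4 * |ξ * e| := by gcongr
    rw [← abs_mul, abs_mul ξ] at h
    nlinarith [neg_abs_le ((2 - q) * (4 - 2 * k) * (ξ * e)), sq_nonneg (|ξ| - 2 * |e|), sq_abs ξ,
      sq_abs e]
  have last_coeff : (2 - q) * (q - 1) * e ^ 2 ≤ 1 * e ^ 2 := by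
    gcongr
    nlinarith
  linarith

lemma rpow_mul_sq_add_le_bellmanHess (hpq : p.HolderConjugate q) (hp : 2 ≤ p) {x y : ℝ}
    (hx : 0 < x) (hy : 0 < y) (ξ η : ℝ) :
    (x ^ (p - 1) + y) ^ (2 - q) * ξ ^ 2 + y ^ (q - 2) * η ^ 2 ≤ bellmanHess p q x y ξ η := by
  have hV : 0 ≤ x ^ (p - 1) := by positivity
  have hN : 0 < x ^ (p - 1) + y := by positivity
  have mixed := mul_le_mul_of_nonneg_right (rpow_mul_div_sq_le hpq hp hx hy) (sq_nonneg η)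
  have form := sq_sub_five_mul_sq_le hp hpq.symm.lt (le_two_of_holderConjugate hpq hp)
    (div_nonneg hV hN.le) ((div_le_one hN).2 (le_add_of_nonneg_right hy.le)) ξ
    (x * η / (x ^ (p - 1) + y))
  have scaled := mul_le_mul_of_nonneg_left form (Real.rpow_nonneg hN.le (2 - q))
  simp only [bellmanHess]
  have : (x * η / (x ^ (p - 1) + y)) ^ 2 = (x / (x ^ (p - 1) + y)) ^ 2 * η ^ 2 := by ring
  rw [mul_sub, this] at scaled
  rw [this]
  linarith

lemma bellman_tangent_gap (hpq : p.HolderConjugate q) (hp : 2 ≤ p) {x y ξ η : ℝ}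
    (hx : 0 < x) (hy : 0 < y) (hx' : 0 < x + ξ) (hy' : 0 < y + η) :
    (((|ξ| / 4) ^ (p - 1) + y / 2) ^ (2 - q) * ξ ^ 2 + (y + |η|) ^ (q - 2) * η ^ 2) / 8 ≤
      bellman p q (x + ξ) (y + η) - bellman p q x y
        - (bellmanDx p q x y * ξ + bellmanDy p q x y * η) := by
  have pos : ∀ {z ζ : ℝ}, 0 < z → 0 < z + ζ → ∀ s ∈ Set.Icc (0 : ℝ) 1, 0 < z + s * ζ := by
    rintro z ζ hz hz' s ⟨h0, h1⟩
    nlinarith [mul_nonneg (sub_nonneg.2 h1) hz.le, mul_nonneg h0 hz'.le]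
  have line : ∀ z ζ s : ℝ, HasDerivAt (fun s => z + s * ζ) ζ s := fun z ζ s => by
    simpa using ((hasDerivAt_id s).mul_const ζ).const_add z
  have hess : ∀ s ∈ Set.Icc (0 : ℝ) 1, _ := fun s hs =>
    rpow_mul_sq_add_le_bellmanHess hpq hp (pos hx hx' s hs) (pos hy hy' s hs) ξ η
  refine (div_eight_le_taylor_remainder (f := fun s => bellman p q (x + s * ξ) (y + s * η))
    (fun s hs => hasDerivAt_bellman hpq (line x ξ s) (line y η s) (pos hx hx' s hs)
      (pos hy hy' s hs))
    (fun s hs => hasDerivAt_bellman_deriv hpq (line x ξ s) (line y η s) (pos hx hx' s hs)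
      (pos hy hy' s hs))
    (fun s hs => le_trans ?_ (hess s hs)) (fun s hs => ?_)).trans_eq (by simp)
  · have := pos hx hx' s hs
    have := pos hy hy' s hs
    positivity
  have hs' : s ∈ Set.Icc (0 : ℝ) 1 := ⟨by linarith [hs.1], by linarith [hs.2]⟩
  refine le_trans ?_ (hess s hs')
  have hX : |ξ| / 4 ≤ x + s * ξ := by
    rcases abs_cases ξ with h | h <;> nlinarith [hs.1, hs.2, h.1]
  have hY : y / 2 ≤ y + s * η := by
    rcases le_total 0 η with h | h <;> nlinarith [hs.1, hs.2, h]
  have hY' : y + s * η ≤ y + |η| := by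
    nlinarith [le_abs_self η, abs_nonneg η, hs.1, hs.2]
  have hq2 : 0 ≤ 2 - q := by linarith [le_two_of_holderConjugate hpq hp]
  have hp1 : 0 ≤ p - 1 := by linarith
  have := Real.rpow_le_rpow_of_nonpos (pos hy hy' s hs') hY' (by linarith : q - 2 ≤ 0)
  gcongr

lemma mul_le_rpow_mul_sq_add_rpow_mul_sq (hq1 : 1 < q) (hq2 : q ≤ 2) {a b y z : ℝ}
    (hb : 0 ≤ b) (hy : 0 < y) (hby : b ≤ y) (hz : y / 2 ≤ z) :
    a * b ≤ z ^ (2 - q) * a ^ 2 + (y + b) ^ (q - 2) * b ^ 2 := by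
  have hY : 0 < y + b := by positivity
  have four : (4 : ℝ) ^ (2 - q) ≤ 4 :=
    (Real.rpow_le_rpow_of_exponent_le (by norm_num) (by linarith)).trans_eq (Real.rpow_one 4)
  have hzY : (y + b) ^ (2 - q) / 4 ≤ z ^ (2 - q) :=
    calc (y + b) ^ (2 - q) / 4 ≤ (y + b) ^ (2 - q) / 4 ^ (2 - q) := by gcongr
      _ = ((y + b) / 4) ^ (2 - q) := (Real.div_rpow hY.le (by norm_num) _).symm
      _ ≤ z ^ (2 - q) := by
        have : 0 ≤ 2 - q := by linarith
        gcongr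
        linarith
  have hneg : (y + b) ^ (q - 2) = ((y + b) ^ (2 - q))⁻¹ := by
    rw [← Real.rpow_neg hY.le, neg_sub]
  have hT : 0 < (y + b) ^ (2 - q) := by positivity
  rw [hneg]
  set T := (y + b) ^ (2 - q)
  calc a * b ≤ a * b + (T * a / 2 - b) ^ 2 / T := le_add_of_nonneg_right (by positivity)
    _ = T / 4 * a ^ 2 + T⁻¹ * b ^ 2 := by field_simp; ring
    _ ≤ z ^ (2 - q) * a ^ 2 + T⁻¹ * b ^ 2 := by gcongr

lemma half_rpow_le_rpow_mul_sq (hq1 : 1 < q) (hq2 : q ≤ 2) {b y : ℝ} (hy : 0 < y)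
    (hyb : y ≤ b) : b ^ q / 2 ≤ (y + b) ^ (q - 2) * b ^ 2 := by
  have hb : 0 < b := hy.trans_le hyb
  have half : (1 / 2 : ℝ) ≤ 2 ^ (q - 2) :=
    calc (1 / 2 : ℝ) = 2 ^ (-1 : ℝ) := by rw [Real.rpow_neg_one]; norm_num
      _ ≤ 2 ^ (q - 2) := Real.rpow_le_rpow_of_exponent_le (by norm_num) (by linarith)
  calc b ^ q / 2 = 1 / 2 * b ^ (q - 2) * b ^ 2 := by
        rw [mul_assoc, ← Real.rpow_natCast b 2, ← Real.rpow_add hb]; norm_num; ring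
    _ ≤ 2 ^ (q - 2) * b ^ (q - 2) * b ^ 2 := by gcongr
    _ = (2 * b) ^ (q - 2) * b ^ 2 := by rw [Real.mul_rpow (by norm_num) hb.le]
    _ ≤ (y + b) ^ (q - 2) * b ^ 2 := by
      have := Real.rpow_le_rpow_of_nonpos (by positivity) (by linarith : y + b ≤ 2 * b)
        (by linarith : q - 2 ≤ 0)
      gcongr

lemma rpow_le_rpow_mul_sq (hpq : p.HolderConjugate q) (hp : 2 ≤ p) {a z : ℝ} (ha : 0 ≤ a)
    (hz : (a / 4) ^ (p - 1) ≤ z) : 4 ^ (2 - p) * a ^ p ≤ z ^ (2 - q) * a ^ 2 := by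
  have hq2 : 0 ≤ 2 - q := by linarith [le_two_of_holderConjugate hpq hp]
  calc (4 : ℝ) ^ (2 - p) * a ^ p = 4 ^ (2 - p) * (a ^ (p - 2) * a ^ 2) := by
        rw [← Real.rpow_natCast a 2, ← Real.rpow_add' ha (by push_cast; linarith)]; norm_num
    _ = ((a / 4) ^ (p - 1)) ^ (2 - q) * a ^ 2 := by
        rw [← Real.rpow_mul (by positivity), sub_one_mul_two_sub_of_holderConjugate hpq,
          Real.div_rpow ha (by norm_num), ← neg_sub p 2, Real.rpow_neg (by norm_num)]
        ring
    _ ≤ z ^ (2 - q) * a ^ 2 := by gcongr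

lemma mul_abs_le_rpow_mul_sq_add (hpq : p.HolderConjugate q) (hp : 2 ≤ p) {y : ℝ} (hy : 0 < y)
    (ξ η : ℝ) :
    4 ^ (2 - p) / 2 * (|ξ| * |η|) ≤
      ((|ξ| / 4) ^ (p - 1) + y / 2) ^ (2 - q) * ξ ^ 2 + (y + |η|) ^ (q - 2) * η ^ 2 := by
  have hq1 : 1 < q := hpq.symm.lt
  have hq2 := le_two_of_holderConjugate hpq hp
  have four : (4 : ℝ) ^ (2 - p) ≤ 1 :=
    Real.rpow_le_one_of_one_le_of_nonpos (by norm_num) (by linarith)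
  rw [← sq_abs ξ, ← sq_abs η]
  have hz : 0 ≤ (|ξ| / 4) ^ (p - 1) := by positivity
  rcases le_total |η| y with h | h
  · refine le_trans ?_ (mul_le_rpow_mul_sq_add_rpow_mul_sq hq1 hq2 (abs_nonneg η) hy h
      (le_add_of_nonneg_left hz))
    exact mul_le_of_le_one_left (by positivity) (by linarith)
  · have hξ := rpow_le_rpow_mul_sq hpq hp (abs_nonneg ξ)
      (le_add_of_nonneg_right (by positivity : 0 ≤ y / 2))
    have hη := half_rpow_le_rpow_mul_sq hq1 hq2 hy h
    have young : |ξ| * |η| ≤ |ξ| ^ p + |η| ^ q :=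
      (Real.young_inequality_of_nonneg (abs_nonneg ξ) (abs_nonneg η) hpq).trans
        (add_le_add (div_le_self (by positivity) (by linarith))
          (div_le_self (by positivity) hq1.le))
    have hη0 : 0 ≤ |η| ^ q := by positivity
    have hξ0 : 0 ≤ 4 ^ (2 - p) * |ξ| ^ p := by positivity
    calc (4 : ℝ) ^ (2 - p) / 2 * (|ξ| * |η|)
        ≤ (4 : ℝ) ^ (2 - p) / 2 * (|ξ| ^ p + |η| ^ q) := by gcongr
      _ ≤ (4 : ℝ) ^ (2 - p) * |ξ| ^ p + |η| ^ q / 2 := by nlinarith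
      _ ≤ _ := add_le_add hξ hη

lemma sum_mul_sub_tangent {ι : Type*} [Fintype ι] {l : ι → ℝ} (hl : ∑ i, l i = 1)
    (x y F : ι → ℝ) (F₀ α β : ℝ) :
    ∑ i, l i * (F i - F₀ - (α * (x i - ∑ i, l i * x i) + β * (y i - ∑ i, l i * y i))) =
      ∑ i, l i * F i - F₀ := by
  have mean : ∀ z : ι → ℝ, ∑ i, l i * (z i - ∑ j, l j * z j) = 0 := fun z => by
    simp only [mul_sub, Finset.sum_sub_distrib, ← Finset.sum_mul, hl, one_mul, sub_self]
  calc _ = ∑ i, l i * F i - (∑ i, l i) * F₀ - (α * ∑ i, l i * (x i - ∑ j, l j * x j)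
        + β * ∑ i, l i * (y i - ∑ j, l j * y j)) := by
        simp only [Finset.mul_sum, Finset.sum_mul, ← Finset.sum_sub_distrib,
          ← Finset.sum_add_distrib]
        exact Finset.sum_congr rfl fun i _ => by ring
    _ = ∑ i, l i * F i - F₀ := by rw [mean, mean, hl]; ring

lemma sum_mul_pos_of_pos {ι : Type*} [Fintype ι] {l z : ι → ℝ} (hl0 : ∀ i, 0 ≤ l i)
    (hl : ∑ i, l i = 1) (hz : ∀ i, 0 < z i) : 0 < ∑ i, l i * z i := by
  obtain ⟨i, hi⟩ : ∃ i, 0 < l i := by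
    by_contra! h
    linarith [Finset.sum_nonpos fun i (_ : i ∈ Finset.univ) => h i]
  exact Finset.sum_pos' (fun i _ => mul_nonneg (hl0 i) (hz i).le)
    ⟨i, Finset.mem_univ _, mul_pos hi (hz i)⟩

lemma mul_abs_sub_mul_abs_sub_le_sum {ι : Type*} [Fintype ι] {P Q : ℝ → ℝ} {c r : ℝ}
    (hP : ∀ ξ, 0 ≤ P ξ) (hQ : ∀ η, 0 ≤ Q η) (hc : 0 ≤ c)
    (pair : ∀ ξ η, c * (|ξ| * |η|) ≤ P ξ + Q η) {l : ι → ℝ} (hr : 0 ≤ r) (hrl : ∀ i, r ≤ l i)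
    (x y : ι → ℝ) (X Y : ℝ) (a a' b b' : ι) :
    c * (r * (|x a - x a'| * |y b - y b'|)) ≤ 8 * ∑ i, l i * (P (x i - X) + Q (y i - Y)) := by
  have hPQ : ∀ i, 0 ≤ P (x i - X) + Q (y i - Y) := fun i => add_nonneg (hP _) (hQ _)
  have single : ∀ i, r * (P (x i - X) + Q (y i - Y)) ≤
      ∑ i, l i * (P (x i - X) + Q (y i - Y)) := fun i =>
    (mul_le_mul_of_nonneg_right (hrl i) (hPQ i)).trans
      (Finset.single_le_sum (f := fun i => l i * (P (x i - X) + Q (y i - Y)))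
        (fun j _ => mul_nonneg (hr.trans (hrl j)) (hPQ j)) (Finset.mem_univ i))
  have tri : |x a - x a'| * |y b - y b'| ≤
      (|x a - X| + |x a' - X|) * (|y b - Y| + |y b' - Y|) := by
    gcongr
    · simpa only [abs_sub_comm X] using abs_sub_le (x a) X (x a')
    · simpa only [abs_sub_comm Y] using abs_sub_le (y b) Y (y b')
  have four_pairs : c * (|x a - x a'| * |y b - y b'|) ≤
      2 * ((P (x a - X) + P (x a' - X)) + (Q (y b - Y) + Q (y b' - Y))) := by
    linarith [pair (x a - X) (y b - Y), pair (x a - X) (y b' - Y), pair (x a' - X) (y b - Y),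
      pair (x a' - X) (y b' - Y), mul_le_mul_of_nonneg_left tri hc]
  have rP : ∀ ξ, 0 ≤ r * P ξ := fun ξ => mul_nonneg hr (hP ξ)
  have rQ : ∀ η, 0 ≤ r * Q η := fun η => mul_nonneg hr (hQ η)
  linarith [mul_le_mul_of_nonneg_left four_pairs hr, single a, single a', single b, single b',
    rQ (y a - Y), rQ (y a' - Y), rP (x b - X), rP (x b' - X)]

lemma bellman_jensen_of_pos (hpq : p.HolderConjugate q) (hp : 2 ≤ p) {ι : Type*} [Fintype ι]
    {l x y : ι → ℝ} {r : ℝ} (hr : 0 ≤ r) (hrl : ∀ i, r ≤ l i) (hl : ∑ i, l i = 1)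
    (hx : ∀ i, 0 < x i) (hy : ∀ i, 0 < y i) (a a' b b' : ι) :
    4 ^ (2 - p) / 128 * (r * (|x a - x a'| * |y b - y b'|)) ≤
      ∑ i, l i * bellman p q (x i) (y i) - bellman p q (∑ i, l i * x i) (∑ i, l i * y i) := by
  have hl0 : ∀ i, 0 ≤ l i := fun i => hr.trans (hrl i)
  have hX := sum_mul_pos_of_pos hl0 hl hx
  have hY := sum_mul_pos_of_pos hl0 hl hy
  let P : ℝ → ℝ := fun ξ => ((|ξ| / 4) ^ (p - 1) + (∑ i, l i * y i) / 2) ^ (2 - q) * ξ ^ 2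
  let Q : ℝ → ℝ := fun η => ((∑ i, l i * y i) + |η|) ^ (q - 2) * η ^ 2
  have lower := mul_abs_sub_mul_abs_sub_le_sum (P := P) (Q := Q) (fun ξ => by positivity)
    (fun η => by positivity) (by positivity) (mul_abs_le_rpow_mul_sq_add hpq hp hY) hr hrl x y
    (∑ i, l i * x i) (∑ i, l i * y i) a a' b b'
  have upper : ∑ i, l i * (P (x i - ∑ i, l i * x i) + Q (y i - ∑ i, l i * y i)) ≤
      8 * (∑ i, l i * bellman p q (x i) (y i)
        - bellman p q (∑ i, l i * x i) (∑ i, l i * y i)) := by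
    rw [← sum_mul_sub_tangent hl x y _ _ (bellmanDx p q (∑ i, l i * x i) (∑ i, l i * y i))
      (bellmanDy p q (∑ i, l i * x i) (∑ i, l i * y i)), Finset.mul_sum]
    refine Finset.sum_le_sum fun i _ => ?_
    have := bellman_tangent_gap (ξ := x i - ∑ i, l i * x i) (η := y i - ∑ i, l i * y i) hpq hp
      hX hY (by simpa using hx i) (by simpa using hy i)
    simp only [add_sub_cancel] at this
    linarith [mul_le_mul_of_nonneg_left this (hl0 i)]
  linarith

lemma continuous_bellman (hpq : p.HolderConjugate q) (hp : 2 ≤ p) :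
    Continuous fun z : ℝ × ℝ => bellman p q z.1 z.2 := by
  have hq2 : 0 ≤ 2 - q := by linarith [le_two_of_holderConjugate hpq hp]
  have hx : Continuous fun z : ℝ × ℝ => z.1 ^ (p - 1) :=
    continuous_fst.rpow_const fun _ => Or.inr hpq.sub_one_pos.le
  have hy : Continuous fun z : ℝ × ℝ => z.2 ^ q :=
    continuous_snd.rpow_const fun _ => Or.inr hpq.symm.nonneg
  have : Continuous fun z : ℝ × ℝ => (z.1 ^ (p - 1) + z.2) ^ (2 - q) :=
    (hx.add continuous_snd).rpow_const fun _ => Or.inr hq2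
  unfold bellman
  fun_prop

lemma bellman_jensen (hpq : p.HolderConjugate q) (hp : 2 ≤ p) {ι : Type*} [Fintype ι]
    {l x y : ι → ℝ} {r : ℝ} (hr : 0 ≤ r) (hrl : ∀ i, r ≤ l i) (hl : ∑ i, l i = 1)
    (hx : ∀ i, 0 ≤ x i) (hy : ∀ i, 0 ≤ y i) (a a' b b' : ι) :
    4 ^ (2 - p) / 128 * (r * (|x a - x a'| * |y b - y b'|)) ≤
      ∑ i, l i * bellman p q (x i) (y i) - bellman p q (∑ i, l i * x i) (∑ i, l i * y i) := by
  have mean_add : ∀ (z : ι → ℝ) (ε : ℝ), ∑ i, l i * (z i + ε) = ∑ i, l i * z i + ε := by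
    intro z ε
    simp only [mul_add, Finset.sum_add_distrib, ← Finset.sum_mul, hl, one_mul]
  let gap : ℝ → ℝ := fun ε => ∑ i, l i * bellman p q (x i + ε) (y i + ε)
    - bellman p q (∑ i, l i * x i + ε) (∑ i, l i * y i + ε)
  have le_gap : ∀ ε > 0, 4 ^ (2 - p) / 128 * (r * (|x a - x a'| * |y b - y b'|)) ≤ gap ε := by
    intro ε hε
    simpa only [mean_add, add_sub_add_right_eq_sub] using
      bellman_jensen_of_pos hpq hp hr hrl hl (x := fun i => x i + ε) (y := fun i => y i + ε)
        (fun i => add_pos_of_nonneg_of_pos (hx i) hε)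
        (fun i => add_pos_of_nonneg_of_pos (hy i) hε) a a' b b'
  have hB : ∀ u v : ℝ, Continuous fun ε : ℝ => bellman p q (u + ε) (v + ε) := fun u v =>
    (continuous_bellman hpq hp).comp (by fun_prop : Continuous fun ε : ℝ => (u + ε, v + ε))
  have gap_continuous : Continuous gap :=
    (continuous_finsetSum _ fun i _ => (hB _ _).const_mul _).sub (hB _ _)
  have := ge_of_tendsto ((gap_continuous.tendsto 0).mono_left
    (nhdsWithin_le_nhds (s := Set.Ioi 0)))
    (eventually_of_mem self_mem_nhdsWithin le_gap)
  simpa only [gap, add_zero] using this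

lemma bellman_nonneg (hpq : p.HolderConjugate q) {x y : ℝ} (hx : 0 ≤ x) (hy : 0 ≤ y) :
    0 ≤ bellman p q x y := by
  have := hpq.symm.sub_one_pos
  have := hpq.symm.pos
  unfold bellman
  positivity

lemma bellman_mono (hpq : p.HolderConjugate q) (hp : 2 ≤ p) {x x' y y' : ℝ} (hx : 0 ≤ x)
    (hy : 0 ≤ y) (hxx' : x ≤ x') (hyy' : y ≤ y') : bellman p q x y ≤ bellman p q x' y' := by
  have := hpq.sub_one_pos.le
  have := hpq.symm.sub_one_pos
  have := hpq.symm.pos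
  have : 0 ≤ 2 - q := by linarith [le_two_of_holderConjugate hpq hp]
  unfold bellman
  gcongr

lemma sq_mul_rpow_add_le (hpq : p.HolderConjugate q) {x y : ℝ} (hx : 0 ≤ x)
    (hy : 0 ≤ y) : x ^ 2 * (x ^ (p - 1) + y) ^ (2 - q) ≤ (x ^ (p - 1) + y) ^ q := by
  have hxN := le_rpow_add_sub_one hpq hx hy
  have hN : 0 ≤ x ^ (p - 1) + y := by positivity
  set N := x ^ (p - 1) + y
  have hq : q ≠ 0 := hpq.symm.ne_zero
  calc x ^ 2 * N ^ (2 - q) ≤ (N ^ (q - 1)) ^ 2 * N ^ (2 - q) := by gcongr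
    _ = N ^ q := by
      rw [← Real.rpow_natCast, ← Real.rpow_mul hN, ← Real.rpow_add' hN] <;>
        push_cast <;> ring_nf
      exact hq

lemma bellman_le (hpq : p.HolderConjugate q) (hp : 2 ≤ p) {x y : ℝ} (hx : 0 ≤ x) (hy : 0 ≤ y) :
    bellman p q x y ≤ (4 + 6 / (q * (q - 1))) * (x ^ p + y ^ q) := by
  have := hpq.symm.sub_one_pos
  have hq0 := hpq.symm.pos
  have hq2 := le_two_of_holderConjugate hpq hp
  have hx0 : 0 ≤ x ^ p := by positivity
  have hpow : (x ^ (p - 1)) ^ q = x ^ p := by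
    rw [← Real.rpow_mul hx, hpq.sub_one_mul_conj]
  have hNq : (x ^ (p - 1) + y) ^ q ≤ 2 ^ (q - 1) * (x ^ p + y ^ q) :=
    hpow ▸ mod_cast NNReal.rpow_add_le_mul_rpow_add_rpow ⟨x ^ (p - 1), by positivity⟩ ⟨y, hy⟩
      hpq.symm.lt.le
  have two : (2 : ℝ) ^ (q - 1) ≤ 4 :=
    calc (2 : ℝ) ^ (q - 1) ≤ 2 ^ (2 : ℝ) :=
          Real.rpow_le_rpow_of_exponent_le (by norm_num) (by linarith)
      _ = 4 := by norm_num
  calc bellman p q x y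
      ≤ 2 ^ (q - 1) * (x ^ p + y ^ q) + 6 / (q * (q - 1)) * y ^ q :=
        add_le_add_left ((sq_mul_rpow_add_le hpq hx hy).trans hNq) _
    _ ≤ 4 * (x ^ p + y ^ q) + 6 / (q * (q - 1)) * (x ^ p + y ^ q) := by
        gcongr
        linarith
    _ = _ := by ring

/-- A Bellman function for the bilinear embedding on `Lᵖ × L^q`, normalised so that its Jensen gap
under a finite average dominates the products of the oscillations of the two arguments. -/
structure IsBellmanFunction (p q c : ℝ) (B : ℝ → ℝ → ℝ) : Prop where
  continuous : Continuous fun z : ℝ × ℝ => B z.1 z.2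
  nonneg : ∀ x y, 0 ≤ B x y
  le : ∀ x y, B x y ≤ c * (|x| ^ p + |y| ^ q)
  jensen : ∀ {ι : Type} [Fintype ι] {l : ι → ℝ} {r : ℝ}, 0 ≤ r → (∀ i, r ≤ l i) →
    ∑ i, l i = 1 → ∀ (x y : ι → ℝ) (a a' b b' : ι),
      r * (|x a - x a'| * |y b - y b'|) ≤
        ∑ i, l i * B (x i) (y i) - B (∑ i, l i * x i) (∑ i, l i * y i)

lemma IsBellmanFunction.swap {c : ℝ} {B : ℝ → ℝ → ℝ} (hB : IsBellmanFunction p q c B) :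
    IsBellmanFunction q p c fun x y => B y x where
  continuous := hB.continuous.comp continuous_swap
  nonneg x y := hB.nonneg y x
  le x y := (hB.le y x).trans_eq (by rw [add_comm])
  jensen hr hrl hl x y a a' b b' := by
    rw [mul_comm |x a - x a'|]
    exact hB.jensen hr hrl hl y x b b' a a'

lemma max_sum_mul_zero_le {ι : Type*} [Fintype ι] {l : ι → ℝ} (hl : ∀ i, 0 ≤ l i) (x : ι → ℝ) :
    max (∑ i, l i * x i) 0 ≤ ∑ i, l i * max (x i) 0 :=
  max_le (Finset.sum_le_sum fun i _ => mul_le_mul_of_nonneg_left (le_max_left _ _) (hl i))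
    (Finset.sum_nonneg fun i _ => mul_nonneg (hl i) (le_max_right _ _))

lemma sum_intUnits (f : ℤˣ → ℝ) : ∑ s, f s = f 1 + f (-1) := by
  rw [UnitsInt.univ, Finset.sum_pair (by decide)]

lemma abs_sub_le_sum_abs_max_sub (x x' : ℝ) :
    |x - x'| ≤ ∑ s : ℤˣ, |max (s * x) 0 - max (s * x') 0| := by
  have split : ∀ z : ℝ, max z 0 - max (-z) 0 = z := max_zero_sub_max_neg_zero_eq_self
  calc |x - x'| = |(max x 0 - max x' 0) - (max (-x) 0 - max (-x') 0)| := by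
        rw [sub_sub_sub_comm, split, split]
    _ ≤ _ := by simpa [sum_intUnits] using abs_sub (max x 0 - max x' 0) _

/-- The extension of `bellman` from the quadrant to the plane obtained by summing over all choices
of signs, normalised. -/
noncomputable def signedBellman (p q x y : ℝ) : ℝ :=
  128 / 4 ^ (2 - p) * ∑ s : ℤˣ, ∑ t : ℤˣ, bellman p q (max (s * x) 0) (max (t * y) 0)

lemma signedBellman_le (hpq : p.HolderConjugate q) (hp : 2 ≤ p) (x y : ℝ) :
    signedBellman p q x y ≤
      128 / 4 ^ (2 - p) * (4 * (4 + 6 / (q * (q - 1)))) * (|x| ^ p + |y| ^ q) := by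
  have := hpq.symm.sub_one_pos
  have := hpq.symm.pos
  have max_le_abs : ∀ (s : ℤˣ) (z : ℝ), max (s * z) 0 ≤ |z| := fun s z => by
    rcases Int.units_eq_one_or s with rfl | rfl <;> simp [le_abs_self, neg_le_abs]
  have bound : ∀ s t : ℤˣ, bellman p q (max (s * x) 0) (max (t * y) 0) ≤
      (4 + 6 / (q * (q - 1))) * (|x| ^ p + |y| ^ q) := fun s t =>
    (bellman_mono hpq hp (le_max_right _ _) (le_max_right _ _) (max_le_abs s x)
      (max_le_abs t y)).trans (bellman_le hpq hp (abs_nonneg x) (abs_nonneg y))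
  rw [signedBellman, mul_assoc]
  gcongr
  refine (Finset.sum_le_sum fun s _ => Finset.sum_le_sum fun t _ => bound s t).trans_eq ?_
  simp only [sum_intUnits]
  ring

lemma signedBellman_jensen (hpq : p.HolderConjugate q) (hp : 2 ≤ p) {ι : Type*} [Fintype ι]
    {l : ι → ℝ} {r : ℝ} (hr : 0 ≤ r) (hrl : ∀ i, r ≤ l i) (hl : ∑ i, l i = 1) (x y : ι → ℝ)
    (a a' b b' : ι) :
    r * (|x a - x a'| * |y b - y b'|) ≤ ∑ i, l i * signedBellman p q (x i) (y i)
      - signedBellman p q (∑ i, l i * x i) (∑ i, l i * y i) := by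
  have hl0 : ∀ i, 0 ≤ l i := fun i => hr.trans (hrl i)
  let X : ℤˣ → ι → ℝ := fun s i => max (s * x i) 0
  let Y : ℤˣ → ι → ℝ := fun t i => max (t * y i) 0
  have mean : ∀ (s : ℤˣ) (z : ι → ℝ),
      max (s * ∑ i, l i * z i) 0 ≤ ∑ i, l i * max (s * z i) 0 := fun s z => by
    simpa only [Finset.mul_sum, mul_left_comm] using max_sum_mul_zero_le hl0 fun i => s * z i
  have quadrant : ∀ s t, 4 ^ (2 - p) / 128 * (r * (|X s a - X s a'| * |Y t b - Y t b'|)) ≤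
      ∑ i, l i * bellman p q (X s i) (Y t i)
        - bellman p q (max (s * ∑ i, l i * x i) 0) (max (t * ∑ i, l i * y i) 0) := fun s t =>
    (bellman_jensen hpq hp hr hrl hl (fun _ => le_max_right _ _) (fun _ => le_max_right _ _)
      a a' b b').trans (sub_le_sub_left (bellman_mono hpq hp (le_max_right _ _) (le_max_right _ _)
        (mean s x) (mean t y)) _)
  have sum_quadrants := Finset.sum_le_sum fun s (_ : s ∈ Finset.univ) =>
    Finset.sum_le_sum fun t (_ : t ∈ Finset.univ) => quadrant s t
  have : (0 : ℝ) < 4 ^ (2 - p) := by positivity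
  calc r * (|x a - x a'| * |y b - y b'|)
      ≤ r * ((∑ s, |X s a - X s a'|) * ∑ t, |Y t b - Y t b'|) := by
        gcongr <;> exact abs_sub_le_sum_abs_max_sub _ _
    _ = 128 / 4 ^ (2 - p) * ∑ s, ∑ t,
          4 ^ (2 - p) / 128 * (r * (|X s a - X s a'| * |Y t b - Y t b'|)) := by
        simp only [sum_intUnits]
        field_simp
    _ ≤ _ := mul_le_mul_of_nonneg_left sum_quadrants (by positivity)
    _ = _ := by
        simp only [signedBellman, sum_intUnits, mul_sub, mul_add, Finset.sum_add_distrib,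
          mul_left_comm (l _), ← Finset.mul_sum, X, Y]
        ring

lemma isBellmanFunction_signedBellman (hpq : p.HolderConjugate q) (hp : 2 ≤ p) :
    IsBellmanFunction p q (128 / 4 ^ (2 - p) * (4 * (4 + 6 / (q * (q - 1)))))
      (signedBellman p q) where
  continuous := continuous_const.mul <| continuous_finsetSum _ fun s _ =>
    continuous_finsetSum _ fun t _ => (continuous_bellman hpq hp).comp
      (by fun_prop : Continuous fun z : ℝ × ℝ => (max (s * z.1) 0, max (t * z.2) 0))
  nonneg _ _ := mul_nonneg (by positivity) (Finset.sum_nonneg fun _ _ => Finset.sum_nonneg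
    fun _ _ => bellman_nonneg hpq (le_max_right _ _) (le_max_right _ _))
  le := signedBellman_le hpq hp
  jensen := signedBellman_jensen hpq hp

theorem exists_isBellmanFunction (hpq : p.HolderConjugate q) :
    ∃ c B, IsBellmanFunction p q c B := by
  rcases le_total 2 p with hp | hp
  · exact ⟨_, _, isBellmanFunction_signedBellman hpq hp⟩
  · have hq : 2 ≤ q := by
      nlinarith [sub_one_mul_two_sub_of_holderConjugate hpq, hpq.sub_one_pos]
    exact ⟨_, _, (isBellmanFunction_signedBellman hpq.symm hq).swap⟩

end Bellman

section LpNorm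

variable {α : Type*} [MeasurableSpace α] {μ : Measure α}

lemma lpNorm_ofReal_eq_integral {p : ℝ} (hp : 0 < p) {f : α → ℝ} (hf : AEStronglyMeasurable f μ) :
    lpNorm f (.ofReal p) μ = (∫ x, |f x| ^ p ∂μ) ^ (1 / p) := by
  rw [lpNorm_eq_integral_norm_rpow_toReal (by simpa using hp) ENNReal.ofReal_ne_top hf,
    ENNReal.toReal_ofReal hp.le, one_div]
  rfl

lemma lpNorm_ofReal_rpow {p : ℝ} (hp : 0 < p) {f : α → ℝ} (hf : AEStronglyMeasurable f μ) :
    lpNorm f (.ofReal p) μ ^ p = ∫ x, |f x| ^ p ∂μ := by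
  rw [lpNorm_ofReal_eq_integral hp hf, one_div, Real.rpow_inv_rpow _ hp.ne']
  exact integral_nonneg fun x => by positivity

end LpNorm

section CompactlySupported

variable {X : Type*} [TopologicalSpace X] [MeasurableSpace X] [OpensMeasurableSpace X]
  {μ : Measure X} [IsFiniteMeasureOnCompacts μ]

lemma memLp_compactlySupported (f : C_c(X, ℝ)) (p : ℝ≥0∞) : MemLp f p μ :=
  f.continuous.memLp_of_hasCompactSupport f.hasCompactSupport

lemma integrable_comp_compactlySupported {B : ℝ → ℝ → ℝ}
    (hB : Continuous fun z : ℝ × ℝ => B z.1 z.2) (hB0 : B 0 0 = 0) (f g : C_c(X, ℝ)) :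
    Integrable (fun x => B (f x) (g x)) μ :=
  (hB.comp (f.continuous.prodMk g.continuous)).integrable_of_hasCompactSupport
    (f.hasCompactSupport.comp₂_left g.hasCompactSupport hB0)

variable (μ) in
/-- The `L²` inner product on `C_c(X, ℝ)` as a bilinear map; it is also the `Lᵖ`-`L^q` duality. -/
noncomputable def ccPairing : C_c(X, ℝ) →ₗ[ℝ] C_c(X, ℝ) →ₗ[ℝ] ℝ :=
  LinearMap.mk₂ ℝ (fun f g => ∫ x, (f * g) x ∂μ)
    (fun f f' g => by
      simp only [add_mul]
      exact integral_add (f * g).integrable (f' * g).integrable)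
    (fun c f g => by
      simp only [smul_mul_assoc]
      exact integral_const_mul c _)
    (fun f g g' => by
      simp only [mul_add]
      exact integral_add (f * g).integrable (f * g').integrable)
    (fun c f g => by
      simp only [mul_smul_comm]
      exact integral_const_mul c _)

lemma ccPairing_apply (f g : C_c(X, ℝ)) : ccPairing μ f g = ∫ x, f x * g x ∂μ := rfl

lemma abs_ccPairing_le (f g : C_c(X, ℝ)) : |ccPairing μ f g| ≤ ∫ x, |f x| * |g x| ∂μ := by
  simpa only [ccPairing_apply, abs_mul] using
    abs_integral_le_integral_abs (μ := μ) (f := fun x => f x * g x)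

lemma abs_ccPairing_le_lpNorm_mul {p q : ℝ} (hpq : p.HolderConjugate q) (f g : C_c(X, ℝ)) :
    |ccPairing μ f g| ≤ lpNorm f (.ofReal p) μ * lpNorm g (.ofReal q) μ := by
  rw [lpNorm_ofReal_eq_integral hpq.pos (memLp_compactlySupported f 1).1,
    lpNorm_ofReal_eq_integral hpq.symm.pos (memLp_compactlySupported g 1).1]
  exact (abs_ccPairing_le f g).trans (integral_mul_norm_le_Lp_mul_Lq hpq
    (memLp_compactlySupported f _) (memLp_compactlySupported g _))

lemma continuous_max_rpow_sub_max_rpow {r : ℝ} (hr : 0 ≤ r) :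
    Continuous fun t : ℝ => max t 0 ^ r - max (-t) 0 ^ r :=
  (continuous_id.max continuous_const).rpow_const (fun _ => .inr hr) |>.sub <|
    (continuous_neg.max continuous_const).rpow_const fun _ => .inr hr

lemma mul_max_rpow_sub_max_rpow {p : ℝ} (hp : 1 < p) (t : ℝ) :
    t * (max t 0 ^ (p - 1) - max (-t) 0 ^ (p - 1)) = |t| ^ p := by
  have zero_rpow : (0 : ℝ) ^ (p - 1) = 0 := Real.zero_rpow (sub_pos.2 hp).ne'
  have mul_rpow : |t| * |t| ^ (p - 1) = |t| ^ p := by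
    rw [← Real.rpow_one_add' (abs_nonneg t) (by linarith), add_sub_cancel]
  rw [← mul_rpow]
  rcases le_total 0 t with ht | ht
  · rw [max_eq_left ht, max_eq_right (neg_nonpos.2 ht), zero_rpow, sub_zero, abs_of_nonneg ht]
  · rw [max_eq_right ht, max_eq_left (neg_nonneg.2 ht), zero_rpow, abs_of_nonpos ht]
    ring

lemma abs_max_rpow_sub_max_rpow {r : ℝ} (hr : 0 < r) (t : ℝ) :
    |max t 0 ^ r - max (-t) 0 ^ r| = |t| ^ r := by
  have zero_rpow : (0 : ℝ) ^ r = 0 := Real.zero_rpow hr.ne'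
  rcases le_total 0 t with ht | ht
  · rw [max_eq_left ht, max_eq_right (neg_nonpos.2 ht), zero_rpow, sub_zero, abs_of_nonneg ht,
      abs_of_nonneg (by positivity)]
  · rw [max_eq_right ht, max_eq_left (neg_nonneg.2 ht), zero_rpow, zero_sub, abs_neg,
      abs_of_nonpos ht, abs_of_nonneg (Real.rpow_nonneg (neg_nonneg.2 ht) r)]

lemma lpNorm_le_of_forall_ccPairing_le {p q : ℝ} (hpq : p.HolderConjugate q) (f : C_c(X, ℝ))
    {A : ℝ} (hA : 0 ≤ A) (h : ∀ g : C_c(X, ℝ), ccPairing μ f g ≤ A * lpNorm g (.ofReal q) μ) :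
    lpNorm f (.ofReal p) μ ≤ A := by
  have hp1 : 0 < p - 1 := sub_pos.2 hpq.lt
  have meas := (memLp_compactlySupported (μ := μ) f 1).1
  let φ : C(ℝ, ℝ) := ⟨_, continuous_max_rpow_sub_max_rpow hp1.le⟩
  have φ_zero : φ 0 = 0 := by simp [φ]
  let g := f.compLeft φ
  have g_apply : ∀ x, g x = φ (f x) := CompactlySupportedContinuousMap.compLeft_apply φ_zero f
  have pairing : ccPairing μ f g = lpNorm f (.ofReal p) μ ^ p := by
    simp only [ccPairing_apply, g_apply, lpNorm_ofReal_rpow hpq.pos meas]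
    exact integral_congr_ae (.of_forall fun x => mul_max_rpow_sub_max_rpow hpq.lt (f x))
  have norm_g : lpNorm g (.ofReal q) μ = lpNorm f (.ofReal p) μ ^ (p - 1) := by
    rw [lpNorm_ofReal_eq_integral hpq.symm.pos (memLp_compactlySupported g 1).1,
      lpNorm_ofReal_eq_integral hpq.pos meas, ← Real.rpow_mul (by positivity)]
    have φ_rpow : ∀ t, |φ t| ^ q = |t| ^ p := fun t => by
      rw [show |φ t| = |t| ^ (p - 1) from abs_max_rpow_sub_max_rpow hp1 t,
        ← Real.rpow_mul (abs_nonneg t), hpq.sub_one_mul_conj]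
    simp only [g_apply, φ_rpow]
    congr 1
    rw [hpq.conjugate_eq]
    field_simp
  rcases (lpNorm_nonneg (f := f) (p := .ofReal p) (μ := μ)).eq_or_lt with hN | hN
  · exact hN ▸ hA
  · refine le_of_mul_le_mul_right ?_ (Real.rpow_pos_of_pos hN (p - 1))
    calc _ = lpNorm f (.ofReal p) μ ^ p := by
          rw [← Real.rpow_one_add' hN.le (by linarith), add_sub_cancel]
      _ ≤ _ := by
          rw [← pairing, ← norm_g]
          exact h g

end CompactlySupported

section Shift

variable {G : Type*} [TopologicalSpace G] [AddCommGroup G] [IsTopologicalAddGroup G]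

/-- The translation `f ↦ f (· + c)` on compactly supported continuous functions. -/
noncomputable def shift (c : G) : C_c(G, ℝ) →ₗ[ℝ] C_c(G, ℝ) :=
  CompactlySupportedContinuousMap.compLinearMap
    { toFun := (· + c)
      continuous_toFun := continuous_add_const c
      cocompact_tendsto' := (Homeomorph.addRight c).isClosedEmbedding.tendsto_cocompact }

@[simp] lemma shift_apply (c : G) (f : C_c(G, ℝ)) (x : G) : shift c f x = f (x + c) := rfl

lemma shift_zero (f : C_c(G, ℝ)) : shift 0 f = f := by ext; simp

lemma shift_comm (a b : G) (f : C_c(G, ℝ)) : shift a (shift b f) = shift b (shift a f) := by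
  ext x
  simp only [shift_apply, add_right_comm]

/-- The difference operator `f ↦ f (· + c) - f`. -/
noncomputable def diff (c : G) : C_c(G, ℝ) →ₗ[ℝ] C_c(G, ℝ) := shift c - .id

lemma diff_eq (c : G) (f : C_c(G, ℝ)) : diff c f = shift c f - f := rfl

@[simp] lemma diff_apply (c : G) (f : C_c(G, ℝ)) (x : G) : diff c f x = f (x + c) - f x := rfl

lemma diff_comm (a b : G) (f : C_c(G, ℝ)) : diff a (diff b f) = diff b (diff a f) := by
  simp only [diff_eq, map_sub, shift_comm a b]
  abel

lemma diff_neg_diff (c : G) (f : C_c(G, ℝ)) :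
    diff (-c) (diff c f) = 2 • f - (shift c f + shift (-c) f) := by
  ext x
  simp
  ring

/-- The averaging operator `f ↦ ∑ i, l i • f (· + s i)`. -/
noncomputable def walk {ι : Type*} [Fintype ι] (l : ι → ℝ) (s : ι → G) :
    Module.End ℝ C_c(G, ℝ) := ∑ i, l i • shift (s i)

variable {ι : Type*} [Fintype ι] {l : ι → ℝ} {s : ι → G}

lemma walk_apply (f : C_c(G, ℝ)) (x : G) : walk l s f x = ∑ i, l i * f (x + s i) := by
  simp [walk, LinearMap.sum_apply]

lemma commute_walk_diff (c : G) : Commute (walk l s) (diff c) :=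
  .sum_left _ _ _ fun _ _ => .smul_left (LinearMap.ext fun f => by
    change shift _ (diff c f) = diff c (shift _ f)
    simp only [diff_eq, map_sub, shift_comm c]) _

lemma walk_pow_diff (c : G) (m : ℕ) (f : C_c(G, ℝ)) :
    (walk l s ^ m) (diff c f) = diff c ((walk l s ^ m) f) :=
  LinearMap.congr_fun ((commute_walk_diff c).pow_left m).eq f

variable [MeasurableSpace G] [BorelSpace G] {μ : Measure G} [μ.IsAddRightInvariant]

lemma integral_walk (hl1 : ∑ i, l i = 1) {f : G → ℝ} (hf : Integrable f μ) :
    ∫ x, ∑ i, l i * f (x + s i) ∂μ = ∫ x, f x ∂μ := by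
  rw [integral_finsetSum _ fun i _ => (hf.comp_add_right (s i)).const_mul _]
  simp only [integral_const_mul, integral_add_right_eq_self f, ← Finset.sum_mul, hl1, one_mul]

variable [IsFiniteMeasureOnCompacts μ]

lemma ccPairing_shift (c : G) (f g : C_c(G, ℝ)) :
    ccPairing μ (shift c f) g = ccPairing μ f (shift (-c) g) := by
  simpa [ccPairing_apply] using
    integral_add_right_eq_self (μ := μ) (fun x => f x * g (x + -c)) c

lemma ccPairing_diff (c : G) (f g : C_c(G, ℝ)) :
    ccPairing μ (diff c f) g = ccPairing μ f (diff (-c) g) := by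
  simp only [diff_eq, map_sub, LinearMap.sub_apply, ccPairing_shift]

lemma lpNorm_shift (c : G) (f : C_c(G, ℝ)) (p : ℝ≥0∞) : lpNorm (shift c f) p μ = lpNorm f p μ := by
  rw [← toReal_eLpNorm (memLp_compactlySupported _ p).1,
    ← toReal_eLpNorm (memLp_compactlySupported _ p).1]
  exact congrArg _ (eLpNorm_comp_measurePreserving (memLp_compactlySupported f p).1
    (measurePreserving_add_right μ c))

lemma lpNorm_walk_le (hl : ∀ i, 0 ≤ l i) (hl1 : ∑ i, l i = 1) {p : ℝ≥0∞} (hp : 1 ≤ p)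
    (f : C_c(G, ℝ)) : lpNorm (walk l s f) p μ ≤ lpNorm f p μ := by
  have coe : ⇑(walk l s f) = ∑ i, l i • ⇑(shift (s i) f) := by
    simp [walk, LinearMap.sum_apply]
  calc lpNorm (walk l s f) p μ ≤ ∑ i, lpNorm (l i • ⇑(shift (s i) f)) p μ :=
        coe ▸ lpNorm_sum_le (fun i _ => (memLp_compactlySupported _ p).const_smul _) hp
    _ = ∑ i, l i * lpNorm f p μ := by
        simp only [lpNorm_const_smul, lpNorm_shift, coe_nnnorm, Real.norm_of_nonneg (hl _)]
    _ = lpNorm f p μ := by rw [← Finset.sum_mul, hl1, one_mul]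

lemma lpNorm_walk_pow_le (hl : ∀ i, 0 ≤ l i) (hl1 : ∑ i, l i = 1) {p : ℝ≥0∞} (hp : 1 ≤ p)
    (m : ℕ) (f : C_c(G, ℝ)) : lpNorm ((walk l s ^ m) f) p μ ≤ lpNorm f p μ := by
  induction m with
  | zero => rfl
  | succ m ih =>
    rw [pow_succ', Module.End.mul_apply]
    exact (lpNorm_walk_le hl hl1 hp _).trans ih

end Shift

section BellmanFlow

variable {p q c : ℝ} {B : ℝ → ℝ → ℝ}

lemma IsBellmanFunction.zero_zero (hpq : p.HolderConjugate q) (hB : IsBellmanFunction p q c B) :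
    B 0 0 = 0 :=
  le_antisymm (by simpa [hpq.ne_zero, hpq.symm.ne_zero] using hB.le 0 0) (hB.nonneg 0 0)

lemma IsBellmanFunction.const_nonneg (hB : IsBellmanFunction p q c B) : 0 ≤ c := by
  have := (hB.nonneg 1 1).trans (hB.le 1 1)
  norm_num at this
  exact this

variable {G : Type*} [TopologicalSpace G] [AddCommGroup G] [IsTopologicalAddGroup G]
  [MeasurableSpace G] {μ : Measure G} {ι : Type} [Fintype ι] {l : ι → ℝ} {s : ι → G}

variable (μ l s) in
/-- The sum over the first `M` steps of the flow `m ↦ walk l s ^ m` of the integrals of the products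
of the increments of `f` in the direction `s a` and of `g` in the direction `s b`. -/
noncomputable def flowPairing (a b : ι) (M : ℕ) (f g : C_c(G, ℝ)) : ℝ :=
  ∑ m ∈ Finset.range M,
    ∫ x, |diff (s a) ((walk l s ^ m) f) x| * |diff (s b) ((walk l s ^ m) g) x| ∂μ

lemma flowPairing_smul (a b : ι) (M : ℕ) (α β : ℝ) (f g : C_c(G, ℝ)) :
    flowPairing μ l s a b M (α • f) (β • g) = |α| * |β| * flowPairing μ l s a b M f g := by
  simp only [flowPairing, Finset.mul_sum, ← integral_const_mul]
  refine Finset.sum_congr rfl fun m _ => integral_congr_ae (.of_forall fun x => ?_)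
  simp only [map_smul, CompactlySupportedContinuousMap.smul_apply, smul_eq_mul, abs_mul]
  ring

variable [BorelSpace G] [IsFiniteMeasureOnCompacts μ]

lemma sum_ccPairing_le_flowPairing (a b : ι) (M : ℕ) (f g : C_c(G, ℝ)) :
    ∑ m ∈ Finset.range M, ccPairing μ (diff (s a) ((walk l s ^ m) f))
      (diff (s b) ((walk l s ^ m) g)) ≤ flowPairing μ l s a b M f g :=
  Finset.sum_le_sum fun _ _ => (le_abs_self _).trans (abs_ccPairing_le _ _)

variable [μ.IsAddRightInvariant] {r : ℝ}

lemma IsBellmanFunction.integral_mul_le_sub (hpq : p.HolderConjugate q)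
    (hB : IsBellmanFunction p q c B) (hr : 0 ≤ r) (hrl : ∀ i, r ≤ l i) (hl : ∑ i, l i = 1)
    {o : ι} (ho : s o = 0) (a b : ι) (f g : C_c(G, ℝ)) :
    r * ∫ x, |diff (s a) f x| * |diff (s b) g x| ∂μ ≤
      ∫ x, B (f x) (g x) ∂μ - ∫ x, B (walk l s f x) (walk l s g x) ∂μ := by
  have int : ∀ f g : C_c(G, ℝ), Integrable (fun x => B (f x) (g x)) μ :=
    integrable_comp_compactlySupported hB.continuous (hB.zero_zero hpq)
  have int_shift : Integrable (fun x => ∑ i, l i * B (f (x + s i)) (g (x + s i))) μ :=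
    integrable_finsetSum _ fun i _ => ((int f g).comp_add_right (s i)).const_mul _
  rw [← integral_walk hl (int f g), ← integral_sub int_shift (int _ _), ← integral_const_mul]
  refine integral_mono ((integrable_comp_compactlySupported (B := fun x y => |x| * |y|)
    (by fun_prop) (by simp) (diff (s a) f) (diff (s b) g)).const_mul r)
    (int_shift.sub (int _ _)) fun x => ?_
  simpa only [diff_apply, ho, add_zero, walk_apply] using
    hB.jensen hr hrl hl (fun i => f (x + s i)) (fun i => g (x + s i)) a o b o

lemma IsBellmanFunction.flowPairing_le_add (hpq : p.HolderConjugate q)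
    (hB : IsBellmanFunction p q c B) (hr : 0 ≤ r) (hrl : ∀ i, r ≤ l i) (hl : ∑ i, l i = 1)
    {o : ι} (ho : s o = 0) (a b : ι) (M : ℕ) (f g : C_c(G, ℝ)) :
    r * flowPairing μ l s a b M f g ≤
      c * (lpNorm f (.ofReal p) μ ^ p + lpNorm g (.ofReal q) μ ^ q) := by
  let energy : ℕ → ℝ := fun m => ∫ x, B ((walk l s ^ m) f x) ((walk l s ^ m) g x) ∂μ
  have memLp : ∀ f : C_c(G, ℝ), ∀ p : ℝ≥0∞, MemLp f p μ := memLp_compactlySupported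
  have int_rpow : ∀ (f : C_c(G, ℝ)) {p : ℝ}, 0 < p → Integrable (fun x => |f x| ^ p) μ :=
    fun f p hp => by
      simpa [ENNReal.toReal_ofReal hp.le] using
        (memLp f (.ofReal p)).integrable_norm_rpow (by simpa using hp) ENNReal.ofReal_ne_top
  calc r * flowPairing μ l s a b M f g
      ≤ ∑ m ∈ Finset.range M, (energy m - energy (m + 1)) := by
        rw [flowPairing, Finset.mul_sum]
        refine Finset.sum_le_sum fun m _ => ?_
        simpa only [energy, pow_succ' (walk l s), Module.End.mul_apply] using
          hB.integral_mul_le_sub hpq hr hrl hl ho a b ((walk l s ^ m) f) ((walk l s ^ m) g)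
    _ = energy 0 - energy M := Finset.sum_range_sub' _ _
    _ ≤ energy 0 := sub_le_self _ (integral_nonneg fun x => hB.nonneg _ _)
    _ ≤ ∫ x, c * (|f x| ^ p + |g x| ^ q) ∂μ :=
        integral_mono
          (integrable_comp_compactlySupported hB.continuous (hB.zero_zero hpq) f g)
          (((int_rpow f hpq.pos).add (int_rpow g hpq.symm.pos)).const_mul c)
          fun x => hB.le _ _
    _ = _ := by
        rw [integral_const_mul, integral_add (int_rpow f hpq.pos) (int_rpow g hpq.symm.pos),
          lpNorm_ofReal_rpow hpq.pos (memLp f 1).1, lpNorm_ofReal_rpow hpq.symm.pos (memLp g 1).1]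

lemma IsBellmanFunction.flowPairing_le_mul (hpq : p.HolderConjugate q)
    (hB : IsBellmanFunction p q c B) (hr : 0 ≤ r) (hrl : ∀ i, r ≤ l i) (hl : ∑ i, l i = 1)
    {o : ι} (ho : s o = 0) (a b : ι) (M : ℕ) {f g : C_c(G, ℝ)} {α β : ℝ} (hα : 0 < α) (hβ : 0 < β)
    (hf : lpNorm f (.ofReal p) μ ≤ α) (hg : lpNorm g (.ofReal q) μ ≤ β) :
    r * flowPairing μ l s a b M f g ≤ 2 * c * (α * β) := by
  have unit : ∀ {p γ : ℝ} {f : C_c(G, ℝ)}, 0 < p → 0 < γ → lpNorm f (.ofReal p) μ ≤ γ →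
      lpNorm ⇑(γ⁻¹ • f) (.ofReal p) μ ^ p ≤ 1 := fun {p γ f} hp hγ hf => by
    rw [CompactlySupportedContinuousMap.coe_smul, lpNorm_const_smul, coe_nnnorm,
      Real.norm_of_nonneg (by positivity)]
    exact Real.rpow_le_one (mul_nonneg (by positivity) lpNorm_nonneg)
      (inv_mul_le_one_of_le₀ hf hγ.le) hp.le
  have scaled := hB.flowPairing_le_add hpq hr hrl hl ho a b M (μ := μ) (α⁻¹ • f) (β⁻¹ • g)
  rw [flowPairing_smul, abs_of_pos (by positivity), abs_of_pos (by positivity)] at scaled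
  calc r * flowPairing μ l s a b M f g
      = α * β * (r * (α⁻¹ * β⁻¹ * flowPairing μ l s a b M f g)) := by field_simp
    _ ≤ α * β * (c * (1 + 1)) := by
        refine mul_le_mul_of_nonneg_left ?_ (by positivity)
        refine scaled.trans (mul_le_mul_of_nonneg_left ?_ hB.const_nonneg)
        exact add_le_add (unit hpq.pos hα hf) (unit hpq.symm.pos hβ hg)
    _ = 2 * c * (α * β) := by ring

lemma IsBellmanFunction.flowPairing_le (hpq : p.HolderConjugate q)
    (hB : IsBellmanFunction p q c B) (hr : 0 ≤ r) (hrl : ∀ i, r ≤ l i) (hl : ∑ i, l i = 1)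
    {o : ι} (ho : s o = 0) (a b : ι) (M : ℕ) (f g : C_c(G, ℝ)) :
    r * flowPairing μ l s a b M f g ≤
      2 * c * (lpNorm f (.ofReal p) μ * lpNorm g (.ofReal q) μ) := by
  have lim : Tendsto (fun ε : ℝ => 2 * c *
      ((lpNorm f (.ofReal p) μ + ε) * (lpNorm g (.ofReal q) μ + ε))) (𝓝[>] 0)
      (𝓝 (2 * c * (lpNorm f (.ofReal p) μ * lpNorm g (.ofReal q) μ))) :=
    (Continuous.tendsto' (by fun_prop) 0 _ (by simp)).mono_left nhdsWithin_le_nhds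
  refine ge_of_tendsto lim (eventually_mem_nhdsWithin.mono fun ε hε => ?_)
  exact hB.flowPairing_le_mul hpq hr hrl hl ho a b M (add_pos_of_nonneg_of_pos lpNorm_nonneg hε)
    (add_pos_of_nonneg_of_pos lpNorm_nonneg hε) (by simpa using (Set.mem_Ioi.1 hε).le)
    (by simpa using (Set.mem_Ioi.1 hε).le)

end BellmanFlow

section LazyWalk

variable {κ : Type} [Fintype κ]

variable (κ) in
/-- The transition probabilities of the lazy walk, which stays put with probability `1 / 2` and
otherwise makes one of the `2 * card κ` steps `± v k`. -/
noncomputable def lazyWeight (i : Option (κ ⊕ κ)) : ℝ :=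
  i.elim (1 / 2) fun _ => 1 / (4 * Fintype.card κ)

lemma sum_lazyWeight [Nonempty κ] : ∑ i, lazyWeight κ i = 1 := by
  simp only [lazyWeight, Fintype.sum_option, Option.elim, Finset.sum_const,
    Finset.card_univ, Fintype.card_sum, nsmul_eq_mul, Nat.cast_add]
  field_simp
  ring

lemma le_lazyWeight [Nonempty κ] (i : Option (κ ⊕ κ)) :
    1 / (4 * Fintype.card κ) ≤ lazyWeight κ i := by
  have card_pos : (1 : ℝ) ≤ Fintype.card κ := mod_cast Fintype.card_pos
  cases i with
  | none => exact one_div_le_one_div_of_le two_pos (by linarith)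
  | some _ => rfl

lemma lazyWeight_nonneg [Nonempty κ] (i : Option (κ ⊕ κ)) : 0 ≤ lazyWeight κ i :=
  le_trans (by positivity) (le_lazyWeight i)

variable {G : Type*} [TopologicalSpace G] [AddCommGroup G] [IsTopologicalAddGroup G]

/-- The steps `0`, `v k` and `-v k` of the lazy walk. -/
def lazyStep (v : κ → G) (i : Option (κ ⊕ κ)) : G := i.elim 0 (Sum.elim v (-v))

/-- The transition operator of the lazy walk with steps `± v k`. -/
noncomputable abbrev lazyWalk (v : κ → G) : Module.End ℝ C_c(G, ℝ) :=
  walk (lazyWeight κ) (lazyStep v)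

lemma lazyWalk_apply (v : κ → G) (f : C_c(G, ℝ)) :
    lazyWalk v f = (1 / 2 : ℝ) • f +
      (1 / (4 * Fintype.card κ) : ℝ) • ∑ k, (shift (v k) f + shift (-v k) f) := by
  simp only [lazyWalk, walk, lazyWeight, lazyStep, Fintype.sum_option, Fintype.sum_sum_type,
    Option.elim, Sum.elim_inl, Sum.elim_inr, Pi.neg_apply, LinearMap.add_apply,
    LinearMap.smul_apply, LinearMap.sum_apply, shift_zero, ← Finset.smul_sum]
  rw [← Finset.sum_add_distrib]

lemma sub_lazyWalk [Nonempty κ] (v : κ → G) (f : C_c(G, ℝ)) :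
    f - lazyWalk v f =
      (1 / (4 * Fintype.card κ) : ℝ) • ∑ k, diff (-v k) (diff (v k) f) := by
  have card_ne : (Fintype.card κ : ℝ) ≠ 0 := by positivity
  simp only [lazyWalk_apply, diff_neg_diff, Finset.sum_sub_distrib, Finset.sum_const,
    Finset.card_univ]
  match_scalars
  all_goals field_simp
  norm_num

variable [MeasurableSpace G] [BorelSpace G] {μ : Measure G} [IsFiniteMeasureOnCompacts μ]
  [μ.IsAddRightInvariant]

lemma ccPairing_lazyWalk (v : κ → G) (f g : C_c(G, ℝ)) :
    ccPairing μ (lazyWalk v f) g = ccPairing μ f (lazyWalk v g) := by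
  simp only [lazyWalk_apply, map_add, map_smul, map_sum, LinearMap.add_apply, LinearMap.smul_apply,
    LinearMap.sum_apply, ccPairing_shift, neg_neg, add_comm]

variable [Nonempty κ]

lemma IsBellmanFunction.flowPairing_lazyStep_le {p q c : ℝ} {B : ℝ → ℝ → ℝ}
    (hpq : p.HolderConjugate q) (hB : IsBellmanFunction p q c B) (v : κ → G)
    (a b : Option (κ ⊕ κ)) (M : ℕ) (f g : C_c(G, ℝ)) :
    1 / (4 * Fintype.card κ) * flowPairing μ (lazyWeight κ) (lazyStep v) a b M f g ≤
      2 * c * (lpNorm f (.ofReal p) μ * lpNorm g (.ofReal q) μ) :=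
  hB.flowPairing_le hpq (by positivity) le_lazyWeight sum_lazyWeight (o := none) rfl a b M f g

lemma ccPairing_sub_lazyWalk (v : κ → G) (f g : C_c(G, ℝ)) :
    ccPairing μ f g - ccPairing μ (lazyWalk v f) (lazyWalk v g) =
      1 / (4 * Fintype.card κ) * ccPairing μ (∑ k, diff (-v k) (diff (v k) f)) (g + lazyWalk v g) :=
  calc _ = ccPairing μ (f - lazyWalk v f) (g + lazyWalk v g) := by
        simp only [map_sub, map_add, LinearMap.sub_apply, ccPairing_lazyWalk]
        ring
    _ = _ := by rw [sub_lazyWalk, map_smul, LinearMap.smul_apply, smul_eq_mul]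

end LazyWalk

section DiscreteDivCurl

variable {κ : Type} {G : Type*} [TopologicalSpace G] [AddCommGroup G] [IsTopologicalAddGroup G]

/-- The `(k, j)` entry of the curl matrix of the field `U`, with forward differences along `v`. -/
noncomputable def discreteCurl (v : κ → G) (U : κ → C_c(G, ℝ)) (k j : κ) : C_c(G, ℝ) :=
  diff (v k) (U j) - diff (v j) (U k)

variable {ι : Type*} [Fintype ι] {l : ι → ℝ} {s : ι → G}

lemma discreteCurl_walk_pow (v : κ → G) (U : κ → C_c(G, ℝ)) (k j : κ) (m : ℕ) :
    discreteCurl v (fun k => (walk l s ^ m) (U k)) k j = (walk l s ^ m) (discreteCurl v U k j) := by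
  simp only [discreteCurl, map_sub, walk_pow_diff]

variable [Fintype κ]

/-- The divergence of the field `U`. It uses backward differences along `v`, so that it is adjoint
to the gradient formed with forward differences. -/
noncomputable def discreteDiv (v : κ → G) (U : κ → C_c(G, ℝ)) : C_c(G, ℝ) :=
  ∑ k, diff (-v k) (U k)

lemma sum_diff_neg_diff_diff (v : κ → G) (U : κ → C_c(G, ℝ)) (i j : κ) :
    ∑ k, diff (-v k) (diff (v k) (diff (v i) (U j))) =
      ∑ k, diff (-v k) (diff (v i) (discreteCurl v U k j)) +
        diff (v j) (diff (v i) (discreteDiv v U)) := by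
  simp only [discreteCurl, discreteDiv, map_sub, map_sum, Finset.sum_sub_distrib]
  have curl : ∀ k, diff (-v k) (diff (v i) (diff (v k) (U j))) =
      diff (-v k) (diff (v k) (diff (v i) (U j))) := fun k => by rw [diff_comm (v i)]
  have div : ∀ k, diff (v j) (diff (v i) (diff (-v k) (U k))) =
      diff (-v k) (diff (v i) (diff (v j) (U k))) := fun k => by
    rw [diff_comm (v i) (-v k), diff_comm (v j) (-v k), diff_comm (v j) (v i)]
  simp only [curl, div, sub_add_cancel]

lemma discreteDiv_walk_pow (v : κ → G) (U : κ → C_c(G, ℝ)) (m : ℕ) :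
    discreteDiv v (fun k => (walk l s ^ m) (U k)) = (walk l s ^ m) (discreteDiv v U) := by
  simp only [discreteDiv, map_sum, walk_pow_diff]

variable [Nonempty κ] [MeasurableSpace G] [BorelSpace G] {μ : Measure G}
  [IsFiniteMeasureOnCompacts μ] [μ.IsAddRightInvariant]

lemma ccPairing_diff_sub_lazyWalk (v : κ → G) (U : κ → C_c(G, ℝ)) (i j : κ) (g : C_c(G, ℝ)) :
    ccPairing μ (diff (v i) (U j)) g -
        ccPairing μ (lazyWalk v (diff (v i) (U j))) (lazyWalk v g) =
      1 / (4 * Fintype.card κ) *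
        (∑ k, ccPairing μ (diff (v i) (discreteCurl v U k j)) (diff (v k) (g + lazyWalk v g)) +
          ccPairing μ (diff (v i) (discreteDiv v U)) (diff (-v j) (g + lazyWalk v g))) := by
  rw [ccPairing_sub_lazyWalk, sum_diff_neg_diff_diff, (ccPairing μ).map_add, map_sum (ccPairing μ),
    LinearMap.add_apply, LinearMap.sum_apply, ccPairing_diff (v j)]
  simp only [ccPairing_diff (-v _), neg_neg]

lemma ccPairing_diff_sub_lazyWalk_pow (v : κ → G) (U : κ → C_c(G, ℝ)) (i j : κ)
    (g : C_c(G, ℝ)) (M : ℕ) :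
    ccPairing μ (diff (v i) (U j)) g -
        ccPairing μ ((lazyWalk v ^ M) (diff (v i) (U j))) ((lazyWalk v ^ M) g) =
      1 / (4 * Fintype.card κ) *
        (∑ k, ∑ m ∈ Finset.range M,
            ccPairing μ (diff (v i) ((lazyWalk v ^ m) (discreteCurl v U k j)))
              (diff (v k) ((lazyWalk v ^ m) (g + lazyWalk v g))) +
          ∑ m ∈ Finset.range M, ccPairing μ (diff (v i) ((lazyWalk v ^ m) (discreteDiv v U)))
            (diff (-v j) ((lazyWalk v ^ m) (g + lazyWalk v g)))) := by
  have step := fun m => ccPairing_diff_sub_lazyWalk (μ := μ) v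
    (fun k => (lazyWalk v ^ m) (U k)) i j ((lazyWalk v ^ m) g)
  have succ : ∀ (m : ℕ) (f : C_c(G, ℝ)),
      lazyWalk v ((lazyWalk v ^ m) f) = (lazyWalk v ^ (m + 1)) f :=
    fun m f => by rw [pow_succ', Module.End.mul_apply]
  have succ' : ∀ (m : ℕ) (f : C_c(G, ℝ)),
      (lazyWalk v ^ m) (lazyWalk v f) = (lazyWalk v ^ (m + 1)) f :=
    fun m f => by rw [pow_succ, Module.End.mul_apply]
  have telescope := Finset.sum_range_sub'
    (fun m => ccPairing μ ((lazyWalk v ^ m) (diff (v i) (U j))) ((lazyWalk v ^ m) g)) M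
  rw [pow_zero, Module.End.one_apply, Module.End.one_apply] at telescope
  rw [← telescope, Finset.sum_comm, ← Finset.sum_add_distrib, Finset.mul_sum]
  refine Finset.sum_congr rfl fun m _ => ?_
  simpa only [discreteCurl_walk_pow, discreteDiv_walk_pow, ← walk_pow_diff, succ, succ', map_add]
    using step m

lemma tendsto_lpNorm_lazyWalk_pow_diff (v : κ → G) (k : κ) (f : C_c(G, ℝ)) :
    Tendsto (fun m => lpNorm ((lazyWalk v ^ m) (diff (v k) f)) (.ofReal 2) μ) atTop (𝓝 0) := by
  have two : (2 : ℝ).HolderConjugate 2 := .two_two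
  obtain ⟨c, B, hB⟩ := exists_isBellmanFunction two
  let N : ℕ → ℝ := fun m => lpNorm ((lazyWalk v ^ m) (diff (v k) f)) (.ofReal 2) μ
  have flow_eq : ∀ M, ∑ m ∈ Finset.range M, N m ^ (2 : ℝ) = flowPairing μ (lazyWeight κ)
      (lazyStep v) (some (.inl k)) (some (.inl k)) M f f := fun M => by
    refine Finset.sum_congr rfl fun m _ => ?_
    simp only [N, lpNorm_ofReal_rpow two_pos (memLp_compactlySupported _ 1).1, walk_pow_diff,
      Real.rpow_two, sq]
    rfl
  have summable : Summable fun m => 1 / (4 * Fintype.card κ) * N m ^ (2 : ℝ) := by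
    refine summable_of_sum_range_le
      (c := 2 * c * (lpNorm f (.ofReal 2) μ * lpNorm f (.ofReal 2) μ))
      (fun m => mul_nonneg (by positivity) (Real.rpow_nonneg lpNorm_nonneg _)) fun M => ?_
    rw [← Finset.mul_sum, flow_eq]
    exact hB.flowPairing_lazyStep_le two v _ _ M f f
  have lim := ((summable_mul_left_iff (by positivity)).1 summable).tendsto_atTop_zero
  have lim_sqrt := lim.rpow_const (p := 2⁻¹) (.inr (by norm_num))
  simpa only [N, Real.rpow_rpow_inv lpNorm_nonneg two_ne_zero,
    Real.zero_rpow (inv_ne_zero two_ne_zero)] using lim_sqrt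

lemma tendsto_ccPairing_lazyWalk_pow_diff (v : κ → G) (k : κ) (f g : C_c(G, ℝ)) :
    Tendsto (fun m => ccPairing μ ((lazyWalk v ^ m) (diff (v k) f)) ((lazyWalk v ^ m) g))
      atTop (𝓝 0) := by
  refine squeeze_zero_norm (fun m => (abs_ccPairing_le_lpNorm_mul .two_two _ _).trans <|
    mul_le_mul_of_nonneg_left
      (lpNorm_walk_pow_le lazyWeight_nonneg sum_lazyWeight (by norm_num) m g) lpNorm_nonneg) ?_
  simpa using (tendsto_lpNorm_lazyWalk_pow_diff v k f).mul_const (lpNorm g (.ofReal 2) μ)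

lemma IsBellmanFunction.ccPairing_diff_le {p q c : ℝ} {B : ℝ → ℝ → ℝ} (hpq : p.HolderConjugate q)
    (hB : IsBellmanFunction p q c B) (v : κ → G) (U : κ → C_c(G, ℝ)) (i j : κ) (g : C_c(G, ℝ)) :
    ccPairing μ (diff (v i) (U j)) g ≤ 4 * c *
      (∑ k, lpNorm (discreteCurl v U k j) (.ofReal p) μ +
        lpNorm (discreteDiv v U) (.ofReal p) μ) * lpNorm g (.ofReal q) μ := by
  let h := g + lazyWalk v g
  have flow : ∀ (b : κ ⊕ κ) (M : ℕ) (f : C_c(G, ℝ)), 1 / (4 * Fintype.card κ) *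
      ∑ m ∈ Finset.range M, ccPairing μ (diff (v i) ((lazyWalk v ^ m) f))
        (diff (lazyStep v (some b)) ((lazyWalk v ^ m) h)) ≤
      2 * c * (lpNorm f (.ofReal p) μ * lpNorm h (.ofReal q) μ) := fun b M f =>
    (mul_le_mul_of_nonneg_left (sum_ccPairing_le_flowPairing (l := lazyWeight κ) (s := lazyStep v)
      (some (.inl i)) (some b) M f h) (by positivity)).trans
      (hB.flowPairing_lazyStep_le hpq v _ _ M f h)
  have norm_h : lpNorm h (.ofReal q) μ ≤ 2 * lpNorm g (.ofReal q) μ := by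
    have one_le : (1 : ℝ≥0∞) ≤ .ofReal q := ENNReal.one_le_ofReal.2 hpq.symm.lt.le
    refine (lpNorm_add_le (memLp_compactlySupported g _) one_le).trans ?_
    rw [two_mul]
    gcongr
    exact lpNorm_walk_le lazyWeight_nonneg sum_lazyWeight one_le g
  have bound : ∀ M, ccPairing μ (diff (v i) (U j)) g ≤
      ccPairing μ ((lazyWalk v ^ M) (diff (v i) (U j))) ((lazyWalk v ^ M) g) +
        2 * c * ((∑ k, lpNorm (discreteCurl v U k j) (.ofReal p) μ +
          lpNorm (discreteDiv v U) (.ofReal p) μ) * lpNorm h (.ofReal q) μ) := fun M => by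
    have curl := Finset.sum_le_sum fun k (_ : k ∈ Finset.univ) =>
      flow (.inl k) M (discreteCurl v U k j)
    have div := flow (.inr j) M (discreteDiv v U)
    rw [← Finset.mul_sum, ← Finset.mul_sum, ← Finset.sum_mul] at curl
    rw [← sub_le_iff_le_add', ccPairing_diff_sub_lazyWalk_pow, mul_add, add_mul, mul_add]
    exact add_le_add curl div
  have lim := (tendsto_ccPairing_lazyWalk_pow_diff (μ := μ) v i (U j) g).add_const
    (2 * c * ((∑ k, lpNorm (discreteCurl v U k j) (.ofReal p) μ +
      lpNorm (discreteDiv v U) (.ofReal p) μ) * lpNorm h (.ofReal q) μ))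
  rw [zero_add] at lim
  have c_nonneg := hB.const_nonneg
  calc ccPairing μ (diff (v i) (U j)) g ≤ _ := ge_of_tendsto' lim bound
    _ ≤ 2 * c * ((∑ k, lpNorm (discreteCurl v U k j) (.ofReal p) μ +
          lpNorm (discreteDiv v U) (.ofReal p) μ) * (2 * lpNorm g (.ofReal q) μ)) := by
        gcongr
        exact add_nonneg (Finset.sum_nonneg fun _ _ => lpNorm_nonneg) lpNorm_nonneg
    _ = _ := by ring

theorem exists_lpNorm_diff_le {p : ℝ} (hp : 1 < p) : ∃ K ≥ 0, ∀ {κ : Type} [Fintype κ]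
    {G : Type*} [TopologicalSpace G] [AddCommGroup G] [IsTopologicalAddGroup G] [MeasurableSpace G]
    [BorelSpace G] {μ : Measure G} [IsFiniteMeasureOnCompacts μ] [μ.IsAddRightInvariant]
    (v : κ → G) (U : κ → C_c(G, ℝ)) (i j : κ),
    lpNorm (diff (v i) (U j)) (.ofReal p) μ ≤ K *
      (∑ k, lpNorm (discreteCurl v U k j) (.ofReal p) μ +
        lpNorm (discreteDiv v U) (.ofReal p) μ) := by
  have hpq := Real.HolderConjugate.conjExponent hp
  obtain ⟨c, B, hB⟩ := exists_isBellmanFunction hpq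
  have c_nonneg := hB.const_nonneg
  refine ⟨4 * c, by positivity, fun {κ _ G} _ _ _ _ _ μ _ _ v U i j => ?_⟩
  have : Nonempty κ := ⟨i⟩
  refine lpNorm_le_of_forall_ccPairing_le hpq _ (mul_nonneg (by positivity) <|
    add_nonneg (Finset.sum_nonneg fun _ _ => lpNorm_nonneg) lpNorm_nonneg) fun g => ?_
  exact hB.ccPairing_diff_le hpq v U i j g

end DiscreteDivCurl

section DivCurl

lemma tendsto_lpNorm_of_dominated {α ι : Type*} [MeasurableSpace α] {μ : Measure α} {l : Filter ι}
    [l.IsCountablyGenerated] {p : ℝ} (hp : 0 < p) {F : ι → α → ℝ} {f b : α → ℝ}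
    (hF : ∀ n, AEStronglyMeasurable (F n) μ) (hf : AEStronglyMeasurable f μ)
    (hb : MemLp b (.ofReal p) μ) (hFb : ∀ᶠ n in l, ∀ x, |F n x| ≤ b x)
    (hlim : ∀ x, Tendsto (F · x) l (𝓝 (f x))) :
    Tendsto (fun n => lpNorm (F n) (.ofReal p) μ) l (𝓝 (lpNorm f (.ofReal p) μ)) := by
  simp only [lpNorm_ofReal_eq_integral hp hf, lpNorm_ofReal_eq_integral hp (hF _)]
  refine Tendsto.rpow_const ?_ (.inr (by positivity))
  have int_b : Integrable (fun x => |b x| ^ p) μ := by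
    simpa [ENNReal.toReal_ofReal hp.le] using
      hb.integrable_norm_rpow (by simpa using hp) ENNReal.ofReal_ne_top
  refine tendsto_integral_filter_of_dominated_convergence _
    (.of_forall fun n => ((hF n).aemeasurable.abs.pow_const p).aestronglyMeasurable)
    (hFb.mono fun n hn => .of_forall fun x => ?_) int_b
    (.of_forall fun x => (hlim x).abs.rpow_const (.inr hp.le))
  rw [Real.norm_of_nonneg (by positivity)]
  exact Real.rpow_le_rpow (abs_nonneg _) ((hn x).trans (le_abs_self _)) hp.le

variable {E : Type*} [NormedAddCommGroup E] [NormedSpace ℝ E]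

lemma tendsto_inv_smul_diff {U : C_c(E, ℝ)} (hU : ContDiff ℝ 1 U) (e x : E) :
    Tendsto (fun h : ℝ => (h⁻¹ • diff (h • e) U) x) (𝓝[>] 0) (𝓝 (fderiv ℝ U x e)) :=
  ((hU.differentiable one_ne_zero x).hasFDerivAt.hasLineDerivAt e).tendsto_slope_zero_right

open scoped Pointwise in
lemma exists_abs_inv_smul_diff_le [FiniteDimensional ℝ E] [MeasurableSpace E] [BorelSpace E]
    (μ : Measure E) [IsFiniteMeasureOnCompacts μ] {U : C_c(E, ℝ)} (hU : ContDiff ℝ 1 U) (e : E) :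
    ∃ b : E → ℝ, (∀ p, MemLp b p μ) ∧
      ∀ h ∈ Set.Ioo (0 : ℝ) 1, ∀ x, |(h⁻¹ • diff (h • e) U) x| ≤ b x := by
  obtain ⟨L, hL⟩ := hU.lipschitzWith_of_hasCompactSupport U.hasCompactSupport one_ne_zero
  have compact : IsCompact (tsupport U + Metric.closedBall 0 ‖e‖) :=
    U.hasCompactSupport.isCompact.add (isCompact_closedBall 0 ‖e‖)
  refine ⟨(tsupport U + Metric.closedBall 0 ‖e‖).indicator fun _ => L * ‖e‖, fun p =>
    memLp_indicator_const p compact.measurableSet _ (.inr compact.measure_lt_top.ne),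
    fun h ⟨h_pos, h_lt⟩ x => ?_⟩
  by_cases hx : x ∈ tsupport U + Metric.closedBall 0 ‖e‖
  · have lipschitz := hL.norm_sub_le (x + h • e) x
    rw [add_sub_cancel_left, norm_smul, Real.norm_of_nonneg h_pos.le] at lipschitz
    rw [Set.indicator_of_mem hx, CompactlySupportedContinuousMap.smul_apply, diff_apply,
      smul_eq_mul, abs_mul, abs_of_pos (inv_pos.2 h_pos), inv_mul_le_iff₀ h_pos]
    exact lipschitz.trans_eq (by ring)
  · have eq_zero : ∀ y : E, ‖y‖ ≤ ‖e‖ → U (x + y) = 0 := fun y hy => by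
      refine image_eq_zero_of_notMem_tsupport fun hxy => hx ?_
      exact Set.mem_add.2 ⟨x + y, hxy, -y, by simpa using hy, by simp⟩
    have norm_le : ‖h • e‖ ≤ ‖e‖ := by
      rw [norm_smul, Real.norm_of_nonneg h_pos.le]
      exact mul_le_of_le_one_left (norm_nonneg e) h_lt.le
    have at_x : U x = 0 := by simpa using eq_zero 0 (by simp)
    simp [Set.indicator_of_notMem hx, at_x, eq_zero _ norm_le]

variable [FiniteDimensional ℝ E] [MeasurableSpace E] [BorelSpace E] {μ : Measure E}
  {p : ℝ}

lemma aestronglyMeasurable_fderiv_apply {F : Type*} [NormedAddCommGroup F] [NormedSpace ℝ F]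
    {U : E → F} (hU : ContDiff ℝ 1 U) (v : E) :
    AEStronglyMeasurable (fun x => fderiv ℝ U x v) μ :=
  ((hU.continuous_fderiv one_ne_zero).clm_apply continuous_const).aestronglyMeasurable

variable [IsFiniteMeasureOnCompacts μ]

lemma tendsto_lpNorm_inv_smul_diff (hp : 0 < p) {U : C_c(E, ℝ)} (hU : ContDiff ℝ 1 U) (v : E) :
    Tendsto (fun h : ℝ => lpNorm (h⁻¹ • diff (h • v) U) (.ofReal p) μ) (𝓝[>] 0)
      (𝓝 (lpNorm (fun x => fderiv ℝ U x v) (.ofReal p) μ)) := by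
  obtain ⟨b, b_memLp, le_b⟩ := exists_abs_inv_smul_diff_le μ hU v
  exact tendsto_lpNorm_of_dominated hp
    (fun h => (h⁻¹ • diff (h • v) U).continuous.aestronglyMeasurable)
    (aestronglyMeasurable_fderiv_apply hU v) (b_memLp _)
    (Filter.mem_of_superset (Ioo_mem_nhdsGT one_pos) le_b) (tendsto_inv_smul_diff hU v)

lemma tendsto_lpNorm_inv_smul_discreteCurl {κ : Type} (hp : 0 < p) {U : κ → C_c(E, ℝ)}
    (hU : ∀ k, ContDiff ℝ 1 (U k)) (e : κ → E) (k j : κ) :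
    Tendsto (fun h : ℝ => lpNorm (h⁻¹ • discreteCurl (fun i => h • e i) U k j) (.ofReal p) μ)
      (𝓝[>] 0)
      (𝓝 (lpNorm (fun x => fderiv ℝ (U j) x (e k) - fderiv ℝ (U k) x (e j)) (.ofReal p) μ)) := by
  obtain ⟨b, b_memLp, le_b⟩ := exists_abs_inv_smul_diff_le μ (hU j) (e k)
  obtain ⟨b', b'_memLp, le_b'⟩ := exists_abs_inv_smul_diff_le μ (hU k) (e j)
  have curl_apply : ∀ (h : ℝ) x, (h⁻¹ • discreteCurl (fun i => h • e i) U k j) x =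
      (h⁻¹ • diff (h • e k) (U j)) x - (h⁻¹ • diff (h • e j) (U k)) x := fun h x => by
    simp [discreteCurl, mul_sub]
  refine tendsto_lpNorm_of_dominated hp
    (fun h => Continuous.aestronglyMeasurable (map_continuous _))
    ((aestronglyMeasurable_fderiv_apply (hU j) _).sub (aestronglyMeasurable_fderiv_apply (hU k) _))
    ((b_memLp _).add (b'_memLp _)) ?_ fun x => ?_
  · filter_upwards [Ioo_mem_nhdsGT one_pos] with h hh x
    rw [curl_apply]
    exact (abs_sub _ _).trans (add_le_add (le_b h hh x) (le_b' h hh x))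
  · simp only [curl_apply]
    exact (tendsto_inv_smul_diff (hU j) (e k) x).sub (tendsto_inv_smul_diff (hU k) (e j) x)

lemma tendsto_lpNorm_inv_smul_discreteDiv {κ : Type} [Fintype κ] (hp : 0 < p) {U : κ → C_c(E, ℝ)}
    (hU : ∀ k, ContDiff ℝ 1 (U k)) (e : κ → E) :
    Tendsto (fun h : ℝ => lpNorm (h⁻¹ • discreteDiv (fun i => h • e i) U) (.ofReal p) μ) (𝓝[>] 0)
      (𝓝 (lpNorm (fun x => ∑ k, fderiv ℝ (U k) x (e k)) (.ofReal p) μ)) := by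
  choose b b_memLp le_b using fun k => exists_abs_inv_smul_diff_le μ (hU k) (-e k)
  have div_apply : ∀ (h : ℝ) x, (h⁻¹ • discreteDiv (fun i => h • e i) U) x =
      ∑ k, (h⁻¹ • diff (h • -e k) (U k)) x := fun h x => by
    simp [discreteDiv, ← Finset.mul_sum, smul_neg]
  have norm_neg : lpNorm (fun x => ∑ k, fderiv ℝ (U k) x (-e k)) (.ofReal p) μ =
      lpNorm (fun x => ∑ k, fderiv ℝ (U k) x (e k)) (.ofReal p) μ := by
    rw [← lpNorm_neg]
    congr 1 with x
    simp
  rw [← norm_neg]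
  refine tendsto_lpNorm_of_dominated hp
    (fun h => Continuous.aestronglyMeasurable (map_continuous _))
    (Finset.aestronglyMeasurable_fun_sum _ fun k _ => aestronglyMeasurable_fderiv_apply (hU k) _)
    (memLp_finsetSum Finset.univ fun k _ => b_memLp k _) ?_ fun x => ?_
  · filter_upwards [Ioo_mem_nhdsGT one_pos] with h hh x
    rw [div_apply]
    exact (Finset.abs_sum_le_sum_abs _ _).trans (Finset.sum_le_sum fun k _ => le_b k h hh x)
  · simp only [div_apply]
    exact tendsto_finsetSum _ fun k _ => tendsto_inv_smul_diff (hU k) (-e k) x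

theorem exists_lpNorm_fderiv_le {p : ℝ} (hp : 1 < p) : ∃ K ≥ 0, ∀ {κ : Type} [Fintype κ]
    {E : Type*} [NormedAddCommGroup E] [NormedSpace ℝ E] [FiniteDimensional ℝ E]
    [MeasurableSpace E] [BorelSpace E] {μ : Measure E} [μ.IsAddHaarMeasure]
    (e : κ → E) (U : κ → E → ℝ), (∀ k, ContDiff ℝ 1 (U k)) → (∀ k, HasCompactSupport (U k)) →
    ∀ i j, lpNorm (fun x => fderiv ℝ (U j) x (e i)) (.ofReal p) μ ≤ K *
      (∑ k, lpNorm (fun x => fderiv ℝ (U j) x (e k) - fderiv ℝ (U k) x (e j)) (.ofReal p) μ +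
        lpNorm (fun x => ∑ k, fderiv ℝ (U k) x (e k)) (.ofReal p) μ) := by
  obtain ⟨K, K_nonneg, hK⟩ := exists_lpNorm_diff_le hp
  refine ⟨K, K_nonneg, fun {κ _ E} _ _ _ _ _ μ _ e U hU supp i j => ?_⟩
  let V : κ → C_c(E, ℝ) := fun k => ⟨⟨U k, (hU k).continuous⟩, supp k⟩
  have hV : ∀ k, ContDiff ℝ 1 (V k) := hU
  have p_pos : 0 < p := one_pos.trans hp
  refine le_of_tendsto_of_tendsto (tendsto_lpNorm_inv_smul_diff p_pos (hV j) (e i))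
    (((tendsto_finsetSum _ fun k _ => tendsto_lpNorm_inv_smul_discreteCurl p_pos hV e k j).add
      (tendsto_lpNorm_inv_smul_discreteDiv p_pos hV e)).const_mul K)
    (eventually_nhdsWithin_of_forall fun h h_pos => ?_)
  have lpNorm_smul : ∀ f : C_c(E, ℝ), lpNorm ⇑(h⁻¹ • f) (.ofReal p) μ =
      h⁻¹ * lpNorm f (.ofReal p) μ := fun f => by
    rw [CompactlySupportedContinuousMap.coe_smul, lpNorm_const_smul,
      Real.nnnorm_of_nonneg (inv_pos.2 h_pos).le]
    rfl
  simp only [lpNorm_smul, ← Finset.mul_sum, ← mul_add, mul_left_comm K]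
  exact mul_le_mul_of_nonneg_left (hK (fun k => h • e k) V i j) (inv_pos.2 h_pos).le

end DivCurl

section DivCurlVector

open scoped InnerProductSpace

variable {E : Type*} [NormedAddCommGroup E] [InnerProductSpace ℝ E]

lemma norm_le_sum_abs_inner {ι : Type*} [Fintype ι] (b : OrthonormalBasis ι ℝ E) (T : E →L[ℝ] E) :
    ‖T‖ ≤ ∑ i, ∑ j, |⟪b j, T (b i)⟫_ℝ| := by
  have vector_le : ∀ y, ‖y‖ ≤ ∑ j, |⟪b j, y⟫_ℝ| := fun y => by
    conv_lhs => rw [← b.sum_repr' y]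
    exact (norm_sum_le _ _).trans_eq (by simp [norm_smul])
  refine T.opNorm_le_bound (by positivity) fun x => ?_
  calc ‖T x‖ = ‖∑ i, ⟪b i, x⟫_ℝ • T (b i)‖ := by
        conv_lhs => rw [← b.sum_repr' x]
        simp only [map_sum, map_smul]
    _ ≤ ∑ i, ‖x‖ * ∑ j, |⟪b j, T (b i)⟫_ℝ| := norm_sum_le_of_le _ fun i _ => by
        rw [norm_smul]
        refine mul_le_mul ?_ (vector_le _) (norm_nonneg _) (norm_nonneg _)
        simpa using norm_inner_le_norm (𝕜 := ℝ) (b i) x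
    _ = (∑ i, ∑ j, |⟪b j, T (b i)⟫_ℝ|) * ‖x‖ := by rw [← Finset.mul_sum, mul_comm]

lemma fderiv_smul_of_contDiff {u : E → E} (hu : ContDiff ℝ 1 u) {ζ : E → ℝ} (hζ : ContDiff ℝ 1 ζ)
    (x : E) :
    fderiv ℝ (ζ • u) x = ζ x • fderiv ℝ u x + (fderiv ℝ ζ x).smulRight (u x) :=
  fderiv_smul (hζ.differentiable one_ne_zero x) (hu.differentiable one_ne_zero x)

lemma abs_inner_fderiv_smul_sub_le {u : E → E} (hu : ContDiff ℝ 1 u) {ζ : E → ℝ}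
    (hζ : ContDiff ℝ 1 ζ) {x : E}
    (symm : ∀ v w, ⟪v, fderiv ℝ u x w⟫_ℝ = ⟪w, fderiv ℝ u x v⟫_ℝ) (v w : E) :
    |⟪v, fderiv ℝ (ζ • u) x w⟫_ℝ - ⟪w, fderiv ℝ (ζ • u) x v⟫_ℝ| ≤
      2 * (‖fderiv ℝ ζ x‖ * ‖u x‖) * ‖v‖ * ‖w‖ := by
  have entry_le : ∀ v w, |fderiv ℝ ζ x w * ⟪v, u x⟫_ℝ| ≤ ‖fderiv ℝ ζ x‖ * ‖u x‖ * ‖v‖ * ‖w‖ :=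
    fun v w => by
      rw [abs_mul]
      exact (mul_le_mul ((fderiv ℝ ζ x).le_opNorm w) (abs_real_inner_le_norm v (u x))
        (by positivity) (by positivity)).trans_eq (by ring)
  have antisymm_eq : ⟪v, fderiv ℝ (ζ • u) x w⟫_ℝ - ⟪w, fderiv ℝ (ζ • u) x v⟫_ℝ =
      fderiv ℝ ζ x w * ⟪v, u x⟫_ℝ - fderiv ℝ ζ x v * ⟪w, u x⟫_ℝ := by
    simp [fderiv_smul_of_contDiff hu hζ, inner_add_right, inner_smul_right, symm v w]
  rw [antisymm_eq]
  exact (abs_sub _ _).trans ((add_le_add (entry_le v w) (entry_le w v)).trans_eq (by ring))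

variable [MeasurableSpace E] [BorelSpace E] {μ : Measure E}

lemma memLp_fderiv [IsFiniteMeasureOnCompacts μ] {F : Type*} [NormedAddCommGroup F]
    [NormedSpace ℝ F] {U : E → F} (hU : ContDiff ℝ 1 U) (supp : HasCompactSupport U) (p : ℝ≥0∞) :
    MemLp (fderiv ℝ U) p μ :=
  (hU.continuous_fderiv one_ne_zero).memLp_of_hasCompactSupport (supp.fderiv ℝ)

variable [FiniteDimensional ℝ E] {p : ℝ}

lemma lpNorm_trace_fderiv_smul_le {u : E → E} (hu : ContDiff ℝ 1 u) {ζ : E → ℝ}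
    (hζ : ContDiff ℝ 1 ζ) (hp : 1 ≤ p)
    (hN : MemLp (fun x => ‖fderiv ℝ ζ x‖ * ‖u x‖) (.ofReal p) μ) :
    lpNorm (fun x => LinearMap.trace ℝ E (fderiv ℝ (ζ • u) x)) (.ofReal p) μ ≤
      lpNorm (fun x => ζ x * LinearMap.trace ℝ E (fderiv ℝ u x)) (.ofReal p) μ +
        lpNorm (fun x => ‖fderiv ℝ ζ x‖ * ‖u x‖) (.ofReal p) μ := by
  have dir_le : ∀ x, ‖fderiv ℝ ζ x (u x)‖ ≤ ‖fderiv ℝ ζ x‖ * ‖u x‖ := fun x =>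
    (fderiv ℝ ζ x).le_opNorm _
  have dir_memLp : MemLp (fun x => fderiv ℝ ζ x (u x)) (.ofReal p) μ := hN.mono'
    ((hζ.continuous_fderiv one_ne_zero).clm_apply hu.continuous).aestronglyMeasurable
    (.of_forall dir_le)
  have trace_eq : (fun x => LinearMap.trace ℝ E (fderiv ℝ (ζ • u) x)) =
      (fun x => ζ x * LinearMap.trace ℝ E (fderiv ℝ u x)) + fun x => fderiv ℝ ζ x (u x) :=
    funext fun x => by simp [fderiv_smul_of_contDiff hu hζ]
  rw [trace_eq]
  exact (lpNorm_add_le' dir_memLp (ENNReal.one_le_ofReal.2 hp)).trans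
    (by gcongr; exact lpNorm_mono_real hN dir_le)

variable [μ.IsAddHaarMeasure]

variable (μ) in
lemma exists_lpNorm_inner_fderiv_le {ι : Type} [Fintype ι] (b : OrthonormalBasis ι ℝ E)
    (hp : 1 < p) :
    ∃ K ≥ 0, ∀ {U : E → E}, ContDiff ℝ 1 U → HasCompactSupport U →
      ∀ {g : E → ℝ}, MemLp g (.ofReal p) μ →
      (∀ x v w, |⟪v, fderiv ℝ U x w⟫_ℝ - ⟪w, fderiv ℝ U x v⟫_ℝ| ≤ g x * ‖v‖ * ‖w‖) →
      ∀ i j, lpNorm (fun x => ⟪b j, fderiv ℝ U x (b i)⟫_ℝ) (.ofReal p) μ ≤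
        K * (lpNorm g (.ofReal p) μ +
          lpNorm (fun x => LinearMap.trace ℝ E (fderiv ℝ U x)) (.ofReal p) μ) := by
  obtain ⟨K, K_nonneg, hK⟩ := exists_lpNorm_fderiv_le hp
  refine ⟨K * (Fintype.card ι + 1), by positivity, fun {U} hU supp {g} g_memLp antisymm i j => ?_⟩
  have fderiv_inner : ∀ j x v, fderiv ℝ (fun x => ⟪b j, U x⟫_ℝ) x v = ⟪b j, fderiv ℝ U x v⟫_ℝ :=
    fun j x v => by
      rw [fderiv_inner_apply ℝ (differentiableAt_const _) (hU.differentiable one_ne_zero x)]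
      simp
  have trace_eq : ∀ x, ∑ k, ⟪b k, fderiv ℝ U x (b k)⟫_ℝ = LinearMap.trace ℝ E (fderiv ℝ U x) :=
    fun x => (LinearMap.trace_eq_sum_inner _ b).symm
  have curl_le : ∀ k, lpNorm (fun x => ⟪b j, fderiv ℝ U x (b k)⟫_ℝ - ⟪b k, fderiv ℝ U x (b j)⟫_ℝ)
      (.ofReal p) μ ≤ lpNorm g (.ofReal p) μ := fun k => lpNorm_mono_real g_memLp fun x => by
    simpa using antisymm x (b j) (b k)
  have estimate := hK (μ := μ) b (fun k x => ⟪b k, U x⟫_ℝ) (fun k => contDiff_const.inner ℝ hU)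
    (fun k => supp.comp_left (inner_zero_right _)) i j
  simp only [fderiv_inner, trace_eq] at estimate
  refine estimate.trans ?_
  rw [mul_assoc]
  gcongr
  calc _ ≤ Fintype.card ι * lpNorm g (.ofReal p) μ +
        lpNorm (fun x => LinearMap.trace ℝ E (fderiv ℝ U x)) (.ofReal p) μ := by
        gcongr
        simpa using Finset.sum_le_card_nsmul Finset.univ _ _ fun k _ => curl_le k
    _ ≤ _ := by
        have := lpNorm_nonneg (f := g) (p := .ofReal p) (μ := μ)
        have := lpNorm_nonneg (f := fun x => LinearMap.trace ℝ E (fderiv ℝ U x))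
          (p := .ofReal p) (μ := μ)
        nlinarith [mul_nonneg (Nat.cast_nonneg (α := ℝ) (Fintype.card ι)) this]

variable (μ) in
theorem exists_lpNorm_fderiv_le_of_antisymm_le (hp : 1 < p) :
    ∃ K ≥ 0, ∀ {U : E → E}, ContDiff ℝ 1 U → HasCompactSupport U →
      ∀ {g : E → ℝ}, MemLp g (.ofReal p) μ →
      (∀ x v w, |⟪v, fderiv ℝ U x w⟫_ℝ - ⟪w, fderiv ℝ U x v⟫_ℝ| ≤ g x * ‖v‖ * ‖w‖) →
      lpNorm (fderiv ℝ U) (.ofReal p) μ ≤ K * (lpNorm g (.ofReal p) μ +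
        lpNorm (fun x => LinearMap.trace ℝ E (fderiv ℝ U x)) (.ofReal p) μ) := by
  let b := stdOrthonormalBasis ℝ E
  obtain ⟨K, K_nonneg, hK⟩ := exists_lpNorm_inner_fderiv_le μ b hp
  have one_le : 1 ≤ ENNReal.ofReal p := ENNReal.one_le_ofReal.2 hp.le
  refine ⟨Module.finrank ℝ E * (Module.finrank ℝ E * K), by positivity,
    fun {U} hU supp {g} g_memLp antisymm => ?_⟩
  have entry_memLp : ∀ i j, MemLp (fun x => ⟪b j, fderiv ℝ U x (b i)⟫_ℝ) (.ofReal p) μ :=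
    fun i j => ((innerSL ℝ (b j)).comp (ContinuousLinearMap.apply ℝ E (b i))).comp_memLp'
      (memLp_fderiv hU supp _)
  have sum_memLp : ∀ i, MemLp (∑ j, fun x => |⟪b j, fderiv ℝ U x (b i)⟫_ℝ|) (.ofReal p) μ :=
    fun i => memLp_finsetSum' _ fun j _ => (entry_memLp i j).abs
  calc lpNorm (fderiv ℝ U) (.ofReal p) μ
      ≤ lpNorm (∑ i, ∑ j, fun x => |⟪b j, fderiv ℝ U x (b i)⟫_ℝ|) (.ofReal p) μ :=
        lpNorm_mono_real (memLp_finsetSum' _ fun i _ => sum_memLp i) fun x => by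
          simpa using norm_le_sum_abs_inner b (fderiv ℝ U x)
    _ ≤ ∑ i, ∑ j, lpNorm (fun x => |⟪b j, fderiv ℝ U x (b i)⟫_ℝ|) (.ofReal p) μ :=
        (lpNorm_sum_le (fun i _ => sum_memLp i) one_le).trans
          (Finset.sum_le_sum fun i _ => lpNorm_sum_le
            (fun j _ => (entry_memLp i j).abs) one_le)
    _ ≤ ∑ _i, ∑ _j, K * (lpNorm g (.ofReal p) μ +
          lpNorm (fun x => LinearMap.trace ℝ E (fderiv ℝ U x)) (.ofReal p) μ) := by
        gcongr with i _ j _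
        rw [lpNorm_fun_abs (entry_memLp i j).1]
        exact hK hU supp g_memLp antisymm i j
    _ = _ := by simp only [Finset.sum_const, Finset.card_univ, Fintype.card_fin, nsmul_eq_mul]; ring

variable (μ) in
theorem exists_lpNorm_smul_fderiv_le (hp : 1 < p) :
    ∃ K ≥ 0, ∀ {u : E → E}, ContDiff ℝ 1 u →
      (∀ x v w, ⟪v, fderiv ℝ u x w⟫_ℝ = ⟪w, fderiv ℝ u x v⟫_ℝ) →
      ∀ {ζ : E → ℝ}, ContDiff ℝ 1 ζ → HasCompactSupport ζ →
      lpNorm (ζ • fderiv ℝ u) (.ofReal p) μ ≤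
        K * (lpNorm (fun x => ‖fderiv ℝ ζ x‖ * ‖u x‖) (.ofReal p) μ +
          lpNorm (fun x => ζ x * LinearMap.trace ℝ E (fderiv ℝ u x)) (.ofReal p) μ) := by
  obtain ⟨K, K_nonneg, hK⟩ := exists_lpNorm_fderiv_le_of_antisymm_le μ hp
  refine ⟨3 * K + 1, by positivity, fun {u} hu symm {ζ} hζ supp => ?_⟩
  have one_le : 1 ≤ ENNReal.ofReal p := ENNReal.one_le_ofReal.2 hp.le
  set N : E → ℝ := fun x => ‖fderiv ℝ ζ x‖ * ‖u x‖
  set S : E → ℝ := fun x => ζ x * LinearMap.trace ℝ E (fderiv ℝ u x)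
  have N_memLp : MemLp N (.ofReal p) μ :=
    ((hζ.continuous_fderiv one_ne_zero).norm.mul hu.continuous.norm).memLp_of_hasCompactSupport
      (supp.fderiv ℝ).norm.mul_right
  have trace_le := lpNorm_trace_fderiv_smul_le hu hζ hp.le N_memLp
  have fderiv_le := hK (hζ.smul hu) supp.smul_right (N_memLp.const_mul 2) fun x =>
    abs_inner_fderiv_smul_sub_le hu hζ (symm x)
  have two_mul_N : lpNorm (fun x => 2 * N x) (.ofReal p) μ = 2 * lpNorm N (.ofReal p) μ := by
    simpa using lpNorm_fun_natCast_mul 2 N (.ofReal p) μ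
  have smul_eq : ζ • fderiv ℝ u = fderiv ℝ (ζ • u) - fun x => (fderiv ℝ ζ x).smulRight (u x) :=
    funext fun x => by simp [fderiv_smul_of_contDiff hu hζ]
  calc lpNorm (ζ • fderiv ℝ u) (.ofReal p) μ
      ≤ lpNorm (fderiv ℝ (ζ • u)) (.ofReal p) μ + lpNorm N (.ofReal p) μ := by
        rw [smul_eq]
        refine (lpNorm_sub_le (memLp_fderiv (hζ.smul hu) supp.smul_right _) one_le).trans ?_
        gcongr
        exact lpNorm_mono_real N_memLp fun x => (ContinuousLinearMap.norm_smulRight_apply _ _).le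
    _ ≤ K * (2 * lpNorm N (.ofReal p) μ + (lpNorm S (.ofReal p) μ + lpNorm N (.ofReal p) μ)) +
          lpNorm N (.ofReal p) μ := by grw [fderiv_le, two_mul_N, trace_le]
    _ ≤ (3 * K + 1) * (lpNorm N (.ofReal p) μ + lpNorm S (.ofReal p) μ) := by
        have := mul_nonneg K_nonneg (lpNorm_nonneg (f := S) (p := .ofReal p) (μ := μ))
        have := lpNorm_nonneg (f := S) (p := .ofReal p) (μ := μ)
        linarith

end DivCurlVector

section JapaneseBracket

variable {E : Type*} [NormedAddCommGroup E]

/-- The smooth weight `⟨x⟩ = (1 + ‖x‖²)^(1/2)`, comparable to `1 + ‖x‖`. -/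
noncomputable def japaneseBracket (x : E) : ℝ := √(1 + ‖x‖ ^ 2)

lemma one_le_japaneseBracket (x : E) : 1 ≤ japaneseBracket x :=
  Real.one_le_sqrt.2 (le_add_of_nonneg_right (sq_nonneg _))

lemma japaneseBracket_pos (x : E) : 0 < japaneseBracket x :=
  one_pos.trans_le (one_le_japaneseBracket x)

lemma norm_le_japaneseBracket (x : E) : ‖x‖ ≤ japaneseBracket x :=
  Real.le_sqrt_of_sq_le (le_add_of_nonneg_left zero_le_one)

lemma japaneseBracket_le_add (x y : E) : japaneseBracket x ≤ japaneseBracket y + ‖x - y‖ := by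
  have bracket_sq : japaneseBracket y ^ 2 = 1 + ‖y‖ ^ 2 := Real.sq_sqrt (by positivity)
  have norm_le : ‖x‖ ≤ ‖y‖ + ‖x - y‖ := by simpa using norm_add_le y (x - y)
  refine Real.sqrt_le_iff.2 ⟨add_nonneg (japaneseBracket_pos y).le (norm_nonneg _), ?_⟩
  nlinarith [norm_nonneg x, norm_nonneg (x - y), norm_le_japaneseBracket y]

lemma continuous_japaneseBracket : Continuous (japaneseBracket : E → ℝ) := by
  unfold japaneseBracket
  fun_prop

@[fun_prop]
lemma measurable_japaneseBracket [MeasurableSpace E] [OpensMeasurableSpace E] :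
    Measurable (japaneseBracket : E → ℝ) := continuous_japaneseBracket.measurable

lemma ofReal_japaneseBracket_rpow_mul (x : E) {s t m : ℝ} (h : s + t = m) :
    ENNReal.ofReal (japaneseBracket x ^ s) * .ofReal (japaneseBracket x ^ t) =
      .ofReal (japaneseBracket x ^ m) := by
  have pos := japaneseBracket_pos x
  rw [← ENNReal.ofReal_mul (by positivity), ← Real.rpow_add pos, h]

lemma ofReal_japaneseBracket_rpow_rpow (x : E) {s t m : ℝ} (ht : 0 ≤ t) (h : s * t = m) :
    ENNReal.ofReal (japaneseBracket x ^ s) ^ t = .ofReal (japaneseBracket x ^ m) := by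
  have pos := japaneseBracket_pos x
  rw [ENNReal.ofReal_rpow_of_nonneg (by positivity) ht, ← Real.rpow_mul pos.le, h]

lemma rpow_neg_le_mul_of_le_mul {a b c t : ℝ} (hc : 0 < c) (ha : 0 < a) (hb : 0 < b) (ht : 0 ≤ t)
    (h : a ≤ c * b) : b ^ (-t) ≤ c ^ t * a ^ (-t) := by
  calc b ^ (-t) = c ^ t * (c * b) ^ (-t) := by
        rw [Real.mul_rpow hc.le hb.le, ← mul_assoc, ← Real.rpow_add hc, add_neg_cancel,
          Real.rpow_zero, one_mul]
    _ ≤ c ^ t * a ^ (-t) :=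
        mul_le_mul_of_nonneg_left (Real.rpow_le_rpow_of_nonpos ha h (neg_nonpos.2 ht))
          (by positivity)

lemma norm_sub_rpow_mul_japaneseBracket_rpow_le {s r : ℝ} (hs : 0 ≤ s) (hr : 0 ≤ r) {x y : E}
    (hxy : x ≠ y) (hy : y ≠ 0) :
    ‖x - y‖ ^ (-s) * japaneseBracket y ^ (-r) ≤
      3 ^ r * (‖x - y‖ ^ (-s) * (japaneseBracket x + ‖x - y‖) ^ (-r)) +
        3 ^ s * (‖y‖ ^ (-r) * (japaneseBracket x + ‖y‖) ^ (-s)) := by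
  have bracket_le := japaneseBracket_le_add x y
  have norm_le := norm_le_japaneseBracket y
  have bracket_pos := japaneseBracket_pos y
  have bracket_pos' := japaneseBracket_pos x
  have dist_pos : 0 < ‖x - y‖ := norm_pos_iff.2 (sub_ne_zero.2 hxy)
  have norm_pos : 0 < ‖y‖ := norm_pos_iff.2 hy
  rcases le_total ‖x - y‖ (japaneseBracket y) with near | far
  · refine le_add_of_le_of_nonneg ?_ (by positivity)
    rw [mul_left_comm]
    gcongr
    exact rpow_neg_le_mul_of_le_mul three_pos (by positivity) bracket_pos hr (by linarith)
  · refine le_add_of_nonneg_of_le (by positivity) ?_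
    rw [mul_left_comm, mul_comm (‖x - y‖ ^ (-s))]
    gcongr ?_ * ?_
    · exact Real.rpow_le_rpow_of_nonpos norm_pos norm_le (by linarith)
    · exact rpow_neg_le_mul_of_le_mul three_pos (by positivity) dist_pos hs (by linarith)

end JapaneseBracket

section RieszKernel

open Module

variable {E : Type*} [NormedAddCommGroup E] [NormedSpace ℝ E] [FiniteDimensional ℝ E]
  [MeasurableSpace E] [BorelSpace E] {μ : Measure E} [μ.IsAddHaarMeasure]

lemma integrable_norm_rpow_mul_one_add_norm_rpow {s r : ℝ} (hs : 0 ≤ s) (hsd : s < finrank ℝ E)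
    (hr : 0 ≤ r) (hsr : finrank ℝ E < s + r) :
    Integrable (fun x : E => ‖x‖ ^ (-s) * (1 + ‖x‖) ^ (-r)) μ := by
  have finrank_pos : 1 ≤ finrank ℝ E := Nat.cast_pos.1 (hs.trans_lt hsd)
  have near_zero : IntegrableOn (fun x : E => ‖x‖ ^ (-s)) (Metric.ball 0 1) μ :=
    integrableOn_ball_of_norm_le_rpow finrank_pos hsd (C := 1)
      (.of_forall fun x => by simp [abs_of_nonneg (Real.rpow_nonneg (norm_nonneg x) _)])
      (measurable_norm.pow_const _).aestronglyMeasurable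
  have near_infty : Integrable (fun x : E => 2 ^ s * (1 + ‖x‖) ^ (-(s + r))) μ :=
    (integrable_one_add_norm hsr).const_mul _
  refine ((near_zero.integrable_indicator measurableSet_ball).add near_infty).mono'
    ((measurable_norm.pow_const _).mul
      ((measurable_norm.const_add _).pow_const _)).aestronglyMeasurable
    (.of_forall fun x => ?_)
  rw [Real.norm_of_nonneg (by positivity), Pi.add_apply]
  by_cases hx : x ∈ Metric.ball (0 : E) 1
  · rw [Set.indicator_of_mem hx]
    exact le_add_of_le_of_nonneg (mul_le_of_le_one_right (by positivity)
      (Real.rpow_le_one_of_one_le_of_nonpos (by simp) (neg_nonpos.2 hr))) (by positivity)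
  · have one_le : 1 ≤ ‖x‖ := by simpa using hx
    rw [Set.indicator_of_notMem hx, zero_add, neg_add, Real.rpow_add (by positivity), ← mul_assoc]
    gcongr
    exact rpow_neg_le_mul_of_le_mul zero_lt_two (by positivity) (by positivity) hs (by linarith)

lemma lintegral_norm_rpow_mul_add_norm_rpow {s r : ℝ} (hs : 0 ≤ s) (hsd : s < finrank ℝ E)
    (hr : 0 ≤ r) (hsr : finrank ℝ E < s + r) {R : ℝ} (hR : 0 < R) :
    ∫⁻ x, .ofReal (‖x‖ ^ (-s) * (R + ‖x‖) ^ (-r)) ∂μ =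
      .ofReal (R ^ (finrank ℝ E - s - r) * ∫ x, ‖x‖ ^ (-s) * (1 + ‖x‖) ^ (-r) ∂μ) := by
  have scaling : ∀ x : E, ‖x‖ ^ (-s) * (R + ‖x‖) ^ (-r) =
      R ^ (-s - r) * (‖R⁻¹ • x‖ ^ (-s) * (1 + ‖R⁻¹ • x‖) ^ (-r)) := fun x => by
    have norm_eq : ‖R⁻¹ • x‖ = R⁻¹ * ‖x‖ := by
      rw [norm_smul, norm_inv, Real.norm_of_nonneg hR.le]
    have add_eq : 1 + R⁻¹ * ‖x‖ = R⁻¹ * (R + ‖x‖) := by field_simp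
    rw [norm_eq, add_eq, Real.mul_rpow (by positivity) (norm_nonneg x),
      Real.mul_rpow (by positivity) (by positivity), mul_mul_mul_comm,
      ← Real.rpow_add (inv_pos.2 hR), ← mul_assoc, Real.inv_rpow hR.le, ← Real.rpow_neg hR.le,
      ← Real.rpow_add hR]
    ring_nf
    simp
  have integrable := (integrable_norm_rpow_mul_one_add_norm_rpow (μ := μ) hs hsd hr hsr).comp_smul
    (inv_ne_zero hR.ne') |>.const_mul (R ^ (-s - r))
  simp only [scaling]
  rw [← ofReal_integral_eq_lintegral_ofReal integrable (.of_forall fun x => by positivity),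
    integral_const_mul, Measure.integral_comp_inv_smul_of_nonneg μ
      (fun x => ‖x‖ ^ (-s) * (1 + ‖x‖) ^ (-r)) hR.le, smul_eq_mul, ← mul_assoc,
    ← Real.rpow_natCast, ← Real.rpow_add hR]
  congr 3
  ring

variable (μ) in
lemma exists_lintegral_riesz_mul_japaneseBracket_le {s r : ℝ} (hs : 0 ≤ s)
    (hsd : s < finrank ℝ E) (hr : 0 ≤ r) (hrd : r < finrank ℝ E) (hsr : finrank ℝ E < s + r) :
    ∃ C : ℝ≥0, ∀ x : E, ∫⁻ y, .ofReal (‖x - y‖ ^ (-s) * japaneseBracket y ^ (-r)) ∂μ ≤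
      C * .ofReal (japaneseBracket x ^ (finrank ℝ E - s - r)) := by
  have : Nontrivial E := nontrivial_of_finrank_pos (R := ℝ) (Nat.cast_pos.1 (hs.trans_lt hsd))
  refine ⟨(3 ^ r * ∫ x, ‖x‖ ^ (-s) * (1 + ‖x‖) ^ (-r) ∂μ +
    3 ^ s * ∫ x, ‖x‖ ^ (-r) * (1 + ‖x‖) ^ (-s) ∂μ).toNNReal, fun x => ?_⟩
  set R := japaneseBracket x
  have R_pos : 0 < R := japaneseBracket_pos x
  have scaled_s := lintegral_norm_rpow_mul_add_norm_rpow (μ := μ) hs hsd hr hsr R_pos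
  have scaled_r := lintegral_norm_rpow_mul_add_norm_rpow (μ := μ) hr hrd hs (by linarith) R_pos
  rw [sub_right_comm] at scaled_r
  have translated : ∫⁻ y, .ofReal (‖x - y‖ ^ (-s) * (R + ‖x - y‖) ^ (-r)) ∂μ =
      ∫⁻ y, .ofReal (‖y‖ ^ (-s) * (R + ‖y‖) ^ (-r)) ∂μ :=
    lintegral_sub_left_eq_self (fun z => .ofReal (‖z‖ ^ (-s) * (R + ‖z‖) ^ (-r))) x
  calc ∫⁻ y, .ofReal (‖x - y‖ ^ (-s) * japaneseBracket y ^ (-r)) ∂μ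
      ≤ ∫⁻ y, (.ofReal (3 ^ r) * .ofReal (‖x - y‖ ^ (-s) * (R + ‖x - y‖) ^ (-r)) +
          .ofReal (3 ^ s) * .ofReal (‖y‖ ^ (-r) * (R + ‖y‖) ^ (-s))) ∂μ := by
        refine lintegral_mono_ae ?_
        filter_upwards [μ.ae_ne x, μ.ae_ne 0] with y hx hy
        rw [← ENNReal.ofReal_mul (by positivity), ← ENNReal.ofReal_mul (by positivity),
          ← ENNReal.ofReal_add (by positivity) (by positivity)]
        exact ENNReal.ofReal_le_ofReal
          (norm_sub_rpow_mul_japaneseBracket_rpow_le hs hr hx.symm hy)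
    _ = _ := by
        rw [lintegral_add_left (by fun_prop), lintegral_const_mul _ (by fun_prop),
          lintegral_const_mul _ (by fun_prop), translated, scaled_s, scaled_r,
          ← ENNReal.ofReal_mul (by positivity), ← ENNReal.ofReal_mul (by positivity),
          ← ENNReal.ofReal_add (by positivity) (by positivity)]
        change _ = ENNReal.ofReal _ * _
        rw [← ENNReal.ofReal_mul (by positivity)]
        ring_nf

end RieszKernel

section SchurTest

variable {X Y : Type*} [MeasurableSpace X] [MeasurableSpace Y] {μ : Measure X} {ν : Measure Y}
  {p q : ℝ}

lemma lintegral_mul_rpow_le_of_weight (hpq : p.HolderConjugate q) {k h φ : Y → ℝ≥0∞}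
    (hk : Measurable k) (hh : Measurable h) (hφ : Measurable φ) (h_pos : ∀ y, h y ≠ 0)
    (h_lt : ∀ y, h y ≠ ∞) :
    (∫⁻ y, k y * φ y ∂ν) ^ p ≤
      (∫⁻ y, k y * h y ^ q ∂ν) ^ (p / q) * ∫⁻ y, k y * (φ y / h y) ^ p ∂ν := by
  have split : ∀ y, k y * φ y = (k y ^ q⁻¹ * h y) * (k y ^ p⁻¹ * (φ y / h y)) := fun y => by
    rw [mul_mul_mul_comm, ← ENNReal.rpow_add_of_nonneg _ _ hpq.symm.inv_nonneg hpq.inv_nonneg,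
      hpq.symm.inv_add_inv_eq_one, ENNReal.rpow_one, ENNReal.mul_div_cancel (h_pos y) (h_lt y)]
  have pow_q : ∀ y, (k y ^ q⁻¹ * h y) ^ q = k y * h y ^ q := fun y => by
    rw [ENNReal.mul_rpow_of_nonneg _ _ hpq.symm.nonneg, ENNReal.rpow_inv_rpow hpq.symm.ne_zero]
  have pow_p : ∀ y, (k y ^ p⁻¹ * (φ y / h y)) ^ p = k y * (φ y / h y) ^ p := fun y => by
    rw [ENNReal.mul_rpow_of_nonneg _ _ hpq.nonneg, ENNReal.rpow_inv_rpow hpq.ne_zero]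
  have holder := ENNReal.lintegral_mul_le_Lp_mul_Lq ν hpq.symm
    (f := fun y => k y ^ q⁻¹ * h y) (g := fun y => k y ^ p⁻¹ * (φ y / h y))
    (by fun_prop) (by fun_prop)
  simp only [Pi.mul_apply, ← split, pow_q, pow_p] at holder
  refine (ENNReal.rpow_le_rpow holder hpq.nonneg).trans_eq ?_
  rw [ENNReal.mul_rpow_of_nonneg _ _ hpq.nonneg, ← ENNReal.rpow_mul, ← ENNReal.rpow_mul,
    one_div_mul_cancel hpq.ne_zero, ENNReal.rpow_one, one_div_mul_eq_div]

theorem lintegral_rpow_le_of_schur_test [SFinite μ] [SFinite ν] (hpq : p.HolderConjugate q)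
    {K : X → Y → ℝ≥0∞} (hK : Measurable K.uncurry) {h₁ : Y → ℝ≥0∞} {h₂ : X → ℝ≥0∞}
    (hh₁ : Measurable h₁) (h₁_pos : ∀ y, h₁ y ≠ 0) (h₁_lt : ∀ y, h₁ y ≠ ∞) (hh₂ : Measurable h₂)
    {C₁ C₂ : ℝ≥0∞} (row : ∀ x, ∫⁻ y, K x y * h₁ y ^ q ∂ν ≤ C₁ * h₂ x ^ q)
    (column : ∀ y, ∫⁻ x, K x y * h₂ x ^ p ∂μ ≤ C₂ * h₁ y ^ p)
    {φ : Y → ℝ≥0∞} (hφ : Measurable φ) :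
    ∫⁻ x, (∫⁻ y, K x y * φ y ∂ν) ^ p ∂μ ≤ C₁ ^ (p / q) * C₂ * ∫⁻ y, φ y ^ p ∂ν := by
  have p_div_q_nonneg : 0 ≤ p / q := div_nonneg hpq.nonneg hpq.symm.nonneg
  have row_measurable : ∀ x, Measurable fun y => K x y * (φ y / h₁ y) ^ p :=
    fun x => hK.of_uncurry_left.mul (by fun_prop)
  have kernel_measurable :
      Measurable (Function.uncurry fun x y => h₂ x ^ p * (K x y * (φ y / h₁ y) ^ p)) :=
    (by fun_prop : Measurable fun z : X × Y => h₂ z.1 ^ p).mul (hK.mul (by fun_prop))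
  calc ∫⁻ x, (∫⁻ y, K x y * φ y ∂ν) ^ p ∂μ
      ≤ ∫⁻ x, C₁ ^ (p / q) * ∫⁻ y, h₂ x ^ p * (K x y * (φ y / h₁ y) ^ p) ∂ν ∂μ := by
        refine lintegral_mono fun x => ?_
        grw [lintegral_mul_rpow_le_of_weight hpq hK.of_uncurry_left hh₁ hφ h₁_pos h₁_lt, row x]
        rw [ENNReal.mul_rpow_of_nonneg _ _ p_div_q_nonneg, ← ENNReal.rpow_mul,
          mul_div_cancel₀ _ hpq.symm.ne_zero, mul_assoc, lintegral_const_mul _ (row_measurable x)]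
    _ = C₁ ^ (p / q) * ∫⁻ y, (∫⁻ x, K x y * h₂ x ^ p ∂μ) * (φ y / h₁ y) ^ p ∂ν := by
        rw [lintegral_const_mul _ kernel_measurable.lintegral_prod_right,
          lintegral_lintegral_swap kernel_measurable.aemeasurable]
        congr! 3 with y
        rw [← lintegral_mul_const _ (by exact hK.of_uncurry_right.mul (by fun_prop))]
        simp only [mul_left_comm, mul_assoc]
    _ ≤ C₁ ^ (p / q) * ∫⁻ y, C₂ * φ y ^ p ∂ν := by
        refine mul_le_mul_right (lintegral_mono fun y => ?_) _
        grw [column y]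
        rw [mul_assoc, ← ENNReal.mul_rpow_of_nonneg _ _ hpq.nonneg,
          ENNReal.mul_div_cancel (h₁_pos y) (h₁_lt y)]
    _ = C₁ ^ (p / q) * C₂ * ∫⁻ y, φ y ^ p ∂ν := by
        rw [lintegral_const_mul _ (by fun_prop), mul_assoc]

end SchurTest

section RieszPotential

open Module

variable {E : Type*} [NormedAddCommGroup E] [NormedSpace ℝ E] [FiniteDimensional ℝ E]
  [MeasurableSpace E] [BorelSpace E]

lemma exists_lintegral_norm_sub_rpow_mul_japaneseBracket_le (μ : Measure E) [μ.IsAddHaarMeasure]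
    {α r : ℝ} (hα : 0 < α) (hαr : α < r) (hr : r < finrank ℝ E) :
    ∃ C : ℝ≥0, ∀ x : E, ∫⁻ y, .ofReal (‖x - y‖ ^ (α - finrank ℝ E)) *
      .ofReal (japaneseBracket y ^ (-r)) ∂μ ≤ C * .ofReal (japaneseBracket x ^ (α - r)) := by
  have := exists_lintegral_riesz_mul_japaneseBracket_le μ (s := finrank ℝ E - α)
    (by linarith) (by linarith) (by linarith) hr (by linarith)
  simpa only [ENNReal.ofReal_mul (Real.rpow_nonneg (norm_nonneg _) _), neg_sub,
    sub_sub_cancel] using this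

lemma exists_lintegral_weighted_rieszKernel_le (μ : Measure E) [μ.IsAddHaarMeasure] {p α θ : ℝ}
    (hp : 1 < p) (hα : 0 < α) (hαθ : α < θ) (hθ : θ < finrank ℝ E) :
    ∃ C : ℝ≥0, ∀ {φ : E → ℝ≥0∞}, Measurable φ →
      ∫⁻ x, (∫⁻ y, .ofReal (japaneseBracket x ^ (θ - finrank ℝ E / p - α)) *
        (.ofReal (‖x - y‖ ^ (α - finrank ℝ E)) *
          .ofReal (japaneseBracket y ^ (-(θ - finrank ℝ E / p)))) * φ y ∂μ) ^ p ∂μ ≤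
      C * ∫⁻ x, φ x ^ p ∂μ := by
  set d : ℝ := (finrank ℝ E : ℝ)
  have hpq := Real.HolderConjugate.conjExponent hp
  set q := p.conjExponent
  have q_eq : q⁻¹ = 1 - p⁻¹ := by linarith [hpq.inv_add_inv_eq_one]
  have β_mul_q : -(d / (p * q)) * q = -(d / p) := by
    have := hpq.symm.ne_zero; field_simp
  have β_mul_p : -(d / (p * q)) * p = d / p - d := by
    rw [div_eq_mul_inv, mul_inv, q_eq]; have := hpq.ne_zero; field_simp; ring
  obtain ⟨C₁, row⟩ := exists_lintegral_norm_sub_rpow_mul_japaneseBracket_le μ hα hαθ hθ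
  obtain ⟨C₂, column⟩ := exists_lintegral_norm_sub_rpow_mul_japaneseBracket_le μ hα
    (r := d + α - θ) (by linarith) (by linarith)
  set a := θ - d / p
  refine ⟨C₁ ^ (p / q) * C₂, fun {φ} hφ => ?_⟩
  rw [ENNReal.coe_mul, ENNReal.coe_rpow_of_nonneg _ (div_nonneg hpq.nonneg hpq.symm.nonneg)]
  refine lintegral_rpow_le_of_schur_test hpq (by unfold Function.uncurry; fun_prop)
    (h₁ := fun y => .ofReal (japaneseBracket y ^ (-(d / (p * q)))))
    (h₂ := fun x => .ofReal (japaneseBracket x ^ (-(d / (p * q)))))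
    (by fun_prop)
    (fun y => (ENNReal.ofReal_pos.2 (Real.rpow_pos_of_pos (japaneseBracket_pos y) _)).ne')
    (fun y => ENNReal.ofReal_ne_top) (by fun_prop) (fun x => ?_) (fun y => ?_) hφ
  · simp only [mul_assoc, ofReal_japaneseBracket_rpow_rpow _ hpq.symm.nonneg β_mul_q,
      ofReal_japaneseBracket_rpow_mul _ (by ring : -a + -(d / p) = -θ)]
    rw [lintegral_const_mul _ (by fun_prop)]
    grw [row x]
    rw [mul_left_comm, ofReal_japaneseBracket_rpow_mul x (by ring : a - α + (α - θ) = -(d / p))]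
  · have regroup : ∀ x, ENNReal.ofReal (japaneseBracket x ^ (a - α)) *
        (.ofReal (‖x - y‖ ^ (α - d)) * .ofReal (japaneseBracket y ^ (-a))) *
          .ofReal (japaneseBracket x ^ (d / p - d)) =
        .ofReal (‖x - y‖ ^ (α - d)) * .ofReal (japaneseBracket x ^ (-(d + α - θ))) *
          .ofReal (japaneseBracket y ^ (-a)) := fun x => by
      rw [← ofReal_japaneseBracket_rpow_mul x (by ring : a - α + (d / p - d) = -(d + α - θ))]
      ring
    simp only [ofReal_japaneseBracket_rpow_rpow _ hpq.nonneg β_mul_p, regroup]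
    rw [lintegral_mul_const _ (by fun_prop)]
    simp only [norm_sub_rev _ y]
    grw [column y]
    rw [mul_assoc, ofReal_japaneseBracket_rpow_mul y (by ring : α - (d + α - θ) + -a = d / p - d)]

theorem exists_lintegral_rieszPotential_le (μ : Measure E) [μ.IsAddHaarMeasure] {p α θ : ℝ}
    (hp : 1 < p) (hα : 0 < α) (hαθ : α < θ) (hθ : θ < finrank ℝ E) :
    ∃ C : ℝ≥0, ∀ {φ : E → ℝ≥0∞}, Measurable φ →
      ∫⁻ x, (.ofReal (japaneseBracket x ^ (θ - finrank ℝ E / p - α)) *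
        ∫⁻ y, .ofReal (‖x - y‖ ^ (α - finrank ℝ E)) * φ y ∂μ) ^ p ∂μ ≤
      C * ∫⁻ x, (.ofReal (japaneseBracket x ^ (θ - finrank ℝ E / p)) * φ x) ^ p ∂μ := by
  obtain ⟨C, bound⟩ := exists_lintegral_weighted_rieszKernel_le μ hp hα hαθ hθ
  refine ⟨C, fun {φ} hφ => le_trans (le_of_eq ?_) (bound (by fun_prop))⟩
  congr! 3 with x
  rw [← lintegral_const_mul _ (by fun_prop)]
  congr! 2 with y
  rw [mul_assoc, mul_assoc, ← mul_assoc (ENNReal.ofReal (japaneseBracket y ^ _)),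
    ofReal_japaneseBracket_rpow_mul y (neg_add_cancel _), Real.rpow_zero, ENNReal.ofReal_one,
    one_mul]

end RieszPotential

section NewtonKernel

open Module Set Metric
open scoped RealInnerProductSpace

lemma integral_eq_integral_toSphere_integral_Ioi {E F : Type*} [NormedAddCommGroup E]
    [NormedSpace ℝ E] [FiniteDimensional ℝ E] [MeasurableSpace E] [BorelSpace E]
    [NormedAddCommGroup F] [NormedSpace ℝ F] [Nontrivial E] {μ : Measure E} [μ.IsAddHaarMeasure]
    {f : E → F} (hf : Integrable f μ) :
    ∫ x, f x ∂μ =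
      ∫ ξ : sphere (0 : E) 1, (∫ r in Ioi (0 : ℝ), r ^ (finrank ℝ E - 1) • f (r • ξ.1))
        ∂μ.toSphere := by
  have polar := μ.measurePreserving_homeomorphUnitSphereProd
  have emb := (homeomorphUnitSphereProd E).measurableEmbedding
  set G := fun y : sphere (0 : E) 1 × Ioi (0 : ℝ) => f (y.2.1 • y.1.1)
  have comp_eq : G ∘ homeomorphUnitSphereProd E = fun x => f x.1 := by
    ext x
    simp [G, smul_smul, norm_ne_zero_iff.2 x.2]
  have G_integrable : Integrable G (μ.toSphere.prod (.volumeIoiPow (finrank ℝ E - 1))) := by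
    rw [← polar.integrable_comp_emb emb, comp_eq]
    exact (integrableOn_iff_comap_subtypeVal (measurableSet_singleton _).compl).1 hf.integrableOn
  calc ∫ x, f x ∂μ = ∫ x : ({0}ᶜ : Set E), f x ∂(μ.comap (↑)) := by
        rw [integral_subtype_comap (measurableSet_singleton _).compl f, restrict_compl_singleton]
    _ = ∫ y, G y ∂(μ.toSphere.prod (.volumeIoiPow (finrank ℝ E - 1))) := by
        rw [← polar.integral_comp emb]
        exact congrArg _ comp_eq.symm
    _ = ∫ ξ : sphere (0 : E) 1, ∫ r : Ioi (0 : ℝ), G (ξ, r)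
          ∂(Measure.volumeIoiPow (finrank ℝ E - 1)) ∂μ.toSphere := integral_prod _ G_integrable
    _ = _ := by
        congr! 2 with ξ
        simp only [Measure.volumeIoiPow, ENNReal.ofReal]
        rw [integral_withDensity_eq_integral_smul (by fun_prop),
          integral_subtype_comap measurableSet_Ioi
            fun r => Real.toNNReal (r ^ (finrank ℝ E - 1)) • f (r • ξ.1)]
        refine setIntegral_congr_fun measurableSet_Ioi fun r hr => ?_
        rw [NNReal.smul_def, Real.coe_toNNReal _ (pow_nonneg hr.out.le _)]

variable {E : Type*} [NormedAddCommGroup E] [InnerProductSpace ℝ E] [MeasurableSpace E]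

/-- The gradient `∇Γ(z) = z / (d ω ‖z‖ᵈ)` of the Newtonian potential, where `d = dim E` and `ω` is
the volume of the unit ball; its value at the singularity `z = 0` is `0`. -/
noncomputable def newtonKernel (μ : Measure E) (z : E) : E :=
  (finrank ℝ E * μ.real (ball 0 1) * ‖z‖ ^ finrank ℝ E)⁻¹ • z

variable (μ : Measure E)

lemma norm_newtonKernel_le (z : E) :
    ‖newtonKernel μ z‖ ≤
      (finrank ℝ E * μ.real (ball 0 1))⁻¹ * ‖z‖ ^ (1 - finrank ℝ E : ℝ) := by
  rcases eq_or_ne z 0 with rfl | hz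
  · simp only [newtonKernel, smul_zero, norm_zero]; positivity
  · rw [newtonKernel, norm_smul, Real.rpow_sub (norm_pos_iff.2 hz), Real.rpow_one,
      Real.rpow_natCast, norm_inv, Real.norm_of_nonneg (by positivity), mul_inv]
    exact (by ring : _ = _).le

/-- The gradient `∇(Γ ∗ f) = ∇Γ ∗ f` of the Newtonian potential of `f`. -/
noncomputable def newtonField (μ : Measure E) (f : E → ℝ) (x : E) : E :=
  ∫ y, f y • newtonKernel μ (x - y) ∂μ

lemma enorm_newtonField_le (f : E → ℝ) (x : E) :
    ‖newtonField μ f x‖ₑ ≤ .ofReal (finrank ℝ E * μ.real (ball (0 : E) 1))⁻¹ *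
      ∫⁻ y, .ofReal (‖x - y‖ ^ (1 - finrank ℝ E : ℝ)) * ‖f y‖ₑ ∂μ := by
  rw [newtonField, ← lintegral_const_mul' _ _ ENNReal.ofReal_ne_top]
  refine (enorm_integral_le_lintegral_enorm _).trans (lintegral_mono fun y => ?_)
  rw [enorm_smul, mul_comm, ← mul_assoc, ← ENNReal.ofReal_mul (by positivity)]
  gcongr
  rw [← ofReal_norm]
  exact ENNReal.ofReal_le_ofReal (norm_newtonKernel_le μ _)

/-- The smooth approximation of `newtonKernel` in which `‖z‖²` is replaced by `ε + ‖z‖²`. -/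
noncomputable def regularizedNewtonKernel (μ : Measure E) (ε : ℝ) (z : E) : E :=
  ((finrank ℝ E * μ.real (ball 0 1))⁻¹ * (ε + ‖z‖ ^ 2) ^ (-(finrank ℝ E / 2 : ℝ))) • z

lemma contDiff_regularizedNewtonKernel {ε : ℝ} (hε : 0 < ε) {n : WithTop ℕ∞} :
    ContDiff ℝ n (regularizedNewtonKernel μ ε) := by
  have pos : ∀ z : E, ε + ‖z‖ ^ 2 ≠ 0 := fun z => by positivity
  exact (contDiff_const.mul
    ((contDiff_const.add (contDiff_norm_sq ℝ)).rpow_const_of_ne pos)).smul contDiff_id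

lemma inner_fderiv_regularizedNewtonKernel_comm {ε : ℝ} (hε : 0 < ε) (x v w : E) :
    ⟪v, fderiv ℝ (regularizedNewtonKernel μ ε) x w⟫ =
      ⟪w, fderiv ℝ (regularizedNewtonKernel μ ε) x v⟫ := by
  have pos : ε + ‖x‖ ^ 2 ≠ 0 := by positivity
  have hasFDerivAt : HasFDerivAt (regularizedNewtonKernel μ ε) _ x :=
    ((((hasStrictFDerivAt_norm_sq x).hasFDerivAt.const_add ε).rpow_const (.inl pos)).const_mul
      _).smul (hasFDerivAt_id x)
  simp only [hasFDerivAt.fderiv, add_apply, smul_apply, ContinuousLinearMap.smulRight_apply,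
    ContinuousLinearMap.id_apply, innerSL_apply_apply, inner_add_right, inner_smul_right,
    smul_eq_mul, nsmul_eq_mul]
  rw [real_inner_comm x v, real_inner_comm x w, real_inner_comm v w]
  ring

lemma regularizedNewtonKernel_zero : regularizedNewtonKernel μ 0 = newtonKernel μ := by
  ext z
  rw [regularizedNewtonKernel, newtonKernel, zero_add, Real.rpow_neg (by positivity),
    ← Real.rpow_natCast, ← Real.rpow_mul (norm_nonneg z), Nat.cast_ofNat,
    mul_div_cancel₀ _ two_ne_zero, Real.rpow_natCast, mul_inv _ (‖z‖ ^ _)]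

lemma norm_regularizedNewtonKernel_le {ε : ℝ} (hε : 0 ≤ ε) (z : E) :
    ‖regularizedNewtonKernel μ ε z‖ ≤ ‖newtonKernel μ z‖ := by
  rcases eq_or_ne z 0 with rfl | hz
  · simp [regularizedNewtonKernel]
  · have : (ε + ‖z‖ ^ 2) ^ (-(finrank ℝ E / 2 : ℝ)) ≤ (0 + ‖z‖ ^ 2) ^ (-(finrank ℝ E / 2 : ℝ)) :=
      Real.rpow_le_rpow_of_nonpos (by positivity) (by gcongr)
        (neg_nonpos.2 (by positivity))
    rw [← regularizedNewtonKernel_zero, regularizedNewtonKernel, regularizedNewtonKernel,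
      norm_smul, norm_smul, Real.norm_of_nonneg (by positivity),
      Real.norm_of_nonneg (by positivity)]
    gcongr

lemma tendsto_regularizedNewtonKernel (z : E) :
    Tendsto (regularizedNewtonKernel μ · z) (𝓝[>] 0) (𝓝 (newtonKernel μ z)) := by
  rcases eq_or_ne z 0 with rfl | hz
  · simp [regularizedNewtonKernel, newtonKernel]
  · rw [← regularizedNewtonKernel_zero]
    refine (ContinuousAt.tendsto ?_).mono_left nhdsWithin_le_nhds
    unfold regularizedNewtonKernel
    have : ContinuousAt (fun ε : ℝ => ε + ‖z‖ ^ 2) 0 := by fun_prop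
    exact (continuousAt_const.mul (this.rpow_const (.inl (by positivity)))).smul continuousAt_const

variable [FiniteDimensional ℝ E] [BorelSpace E]

lemma measurable_newtonKernel : Measurable (newtonKernel μ) := by
  unfold newtonKernel
  fun_prop

lemma integral_inner_mul_fderiv_comm_of_symm [μ.IsAddHaarMeasure] {g : E → ℝ} {V : E → E}
    (hV : ContDiff ℝ 1 V)
    (symm : ∀ x v w, ⟪v, fderiv ℝ V x w⟫ = ⟪w, fderiv ℝ V x v⟫)
    (hg : ContDiff ℝ 1 g) (supp : HasCompactSupport g)
    (v w : E) :
    ∫ z, ⟪v, V z⟫ * fderiv ℝ g z w ∂μ = ∫ z, ⟪w, V z⟫ * fderiv ℝ g z v ∂μ := by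
  have := hV.continuous_fderiv one_ne_zero
  have := hg.continuous_fderiv one_ne_zero
  have supp' : ∀ w, HasCompactSupport fun z => fderiv ℝ g z w := supp.fderiv_apply (𝕜 := ℝ)
  have fderiv_inner : ∀ v z w, fderiv ℝ (fun z => ⟪v, V z⟫) z w = ⟪v, fderiv ℝ V z w⟫ :=
    fun v z w => by
      rw [fderiv_inner_apply ℝ (by fun_prop) (hV.differentiable one_ne_zero z)]; simp
  have by_parts : ∀ v w, ∫ z, ⟪v, V z⟫ * fderiv ℝ g z w ∂μ =
      -∫ z, ⟪v, fderiv ℝ V z w⟫ * g z ∂μ := fun v w => by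
    simp_rw [← fderiv_inner]
    refine integral_mul_fderiv_eq_neg_fderiv_mul_of_integrable ?_ ?_ ?_
      (fun z _ => (differentiableAt_const v).inner ℝ (hV.differentiable one_ne_zero z))
      (fun z _ => hg.differentiable one_ne_zero z)
    · simp_rw [fderiv_inner]
      exact (by fun_prop : Continuous _).integrable_of_hasCompactSupport supp.mul_left
    · exact (by fun_prop : Continuous _).integrable_of_hasCompactSupport (supp' w).mul_left
    · exact (by fun_prop : Continuous _).integrable_of_hasCompactSupport supp.mul_left
  rw [by_parts, by_parts]
  simp only [symm _ v w]

variable [Nontrivial E] [μ.IsAddHaarMeasure]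

lemma locallyIntegrable_newtonKernel : LocallyIntegrable (newtonKernel μ) μ :=
  locallyIntegrable_of_norm_le_rpow (Nat.one_le_iff_ne_zero.2 finrank_pos.ne')
    (α := finrank ℝ E - 1) (by linarith)
    (.of_forall fun z => by simpa using norm_newtonKernel_le μ z)
    (measurable_newtonKernel μ).aestronglyMeasurable

lemma integrable_clm_apply_newtonKernel {F : Type*} [NormedAddCommGroup F] [NormedSpace ℝ F]
    {T : E → E →L[ℝ] F} (hT : Continuous T) (supp : HasCompactSupport T) :
    Integrable (fun z => T z (newtonKernel μ z)) μ := by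
  refine ((locallyIntegrable_newtonKernel μ).integrable_smul_left_of_hasCompactSupport hT.norm
    supp.norm).mono ?_ (.of_forall fun z => ?_)
  · exact (ContinuousLinearMap.id ℝ (E →L[ℝ] F)).aestronglyMeasurable_comp₂
      hT.aestronglyMeasurable (measurable_newtonKernel μ).aestronglyMeasurable
  · simpa [norm_smul] using (T z).le_opNorm _

variable {g : E → ℝ}

lemma integrable_fderiv_apply_smul_newtonKernel (hg : ContDiff ℝ 1 g) (supp : HasCompactSupport g)
    (w : E) : Integrable (fun z => fderiv ℝ g z w • newtonKernel μ z) μ :=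
  (locallyIntegrable_newtonKernel μ).integrable_smul_left_of_hasCompactSupport
    ((hg.continuous_fderiv one_ne_zero).clm_apply continuous_const)
    (supp.fderiv_apply (𝕜 := ℝ) w)

lemma integral_fderiv_apply_newtonKernel (hg : ContDiff ℝ 1 g) (supp : HasCompactSupport g) :
    ∫ z, fderiv ℝ g z (newtonKernel μ z) ∂μ = -g 0 := by
  set c : ℝ := finrank ℝ E * μ.real (ball (0 : E) 1)
  have c_pos : 0 < c := by
    have ball_pos : 0 < μ.real (ball (0 : E) 1) :=
      ENNReal.toReal_pos (measure_ball_pos μ 0 one_pos).ne' measure_ball_lt_top.ne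
    have := finrank_pos (R := ℝ) (M := E)
    positivity
  have radial : ∀ ξ : sphere (0 : E) 1, ∀ r ∈ Ioi (0 : ℝ),
      r ^ (finrank ℝ E - 1) • fderiv ℝ g (r • ξ.1) (newtonKernel μ (r • ξ.1)) =
        c⁻¹ * deriv (fun r : ℝ => g (r • ξ.1)) r := fun ξ r hr => by
    have deriv_eq : deriv (fun r : ℝ => g (r • ξ.1)) r = fderiv ℝ g (r • ξ.1) ξ.1 :=
      ((hg.differentiable one_ne_zero _).hasFDerivAt.comp_hasDerivAt r
        (by simpa using (hasDerivAt_id r).smul_const ξ.1)).deriv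
    have kernel_eq : newtonKernel μ (r • ξ.1) = (c * r ^ (finrank ℝ E - 1))⁻¹ • ξ.1 := by
      have : r ^ finrank ℝ E = r ^ (finrank ℝ E - 1) * r := (pow_sub_one_mul finrank_pos.ne' r).symm
      rw [newtonKernel, norm_smul, norm_eq_of_mem_sphere, mul_one, Real.norm_of_nonneg hr.out.le,
        smul_smul, this, ← mul_assoc, mul_inv, inv_mul_cancel_right₀ hr.out.ne']
    rw [deriv_eq, kernel_eq, map_smul, smul_eq_mul, smul_eq_mul, mul_inv, ← mul_assoc,
      mul_left_comm, mul_inv_cancel₀ (pow_pos hr _).ne', mul_one]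
  have ray_integral : ∀ ξ : sphere (0 : E) 1,
      ∫ r in Ioi (0 : ℝ), deriv (fun r : ℝ => g (r • ξ.1)) r = -g 0 := fun ξ => by
    have : HasCompactSupport (fun r : ℝ => g (r • ξ.1)) :=
      supp.comp_isClosedEmbedding (isClosedEmbedding_smul_left (ne_zero_of_mem_unit_sphere ξ))
    simpa using this.integral_Ioi_deriv_eq (by fun_prop) 0
  rw [integral_eq_integral_toSphere_integral_Ioi (integrable_clm_apply_newtonKernel μ
    (hg.continuous_fderiv one_ne_zero) (supp.fderiv (𝕜 := ℝ)))]
  have inner_integral : ∀ ξ : sphere (0 : E) 1, ∫ r in Ioi (0 : ℝ), r ^ (finrank ℝ E - 1) •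
      fderiv ℝ g (r • ξ.1) (newtonKernel μ (r • ξ.1)) = c⁻¹ * -g 0 := fun ξ => by
    rw [setIntegral_congr_fun measurableSet_Ioi (radial ξ), integral_const_mul, ray_integral]
  rw [integral_congr_ae (.of_forall inner_integral), integral_const,
    Measure.toSphere_real_apply_univ, smul_eq_mul]
  exact mul_inv_cancel_left₀ c_pos.ne' _

lemma integral_inner_newtonKernel_mul_fderiv_comm (hg : ContDiff ℝ 1 g)
    (supp : HasCompactSupport g) (v w : E) :
    ∫ z, ⟪v, newtonKernel μ z⟫ * fderiv ℝ g z w ∂μ =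
      ∫ z, ⟪w, newtonKernel μ z⟫ * fderiv ℝ g z v ∂μ := by
  have := hg.continuous_fderiv one_ne_zero
  have lim : ∀ v w, Tendsto
      (fun ε => ∫ z, ⟪v, regularizedNewtonKernel μ ε z⟫ * fderiv ℝ g z w ∂μ) (𝓝[>] 0)
      (𝓝 (∫ z, ⟪v, newtonKernel μ z⟫ * fderiv ℝ g z w ∂μ)) := fun v w => by
    have dominating : Integrable (fun z => ‖fderiv ℝ g z w‖ * (‖v‖ * ‖newtonKernel μ z‖)) μ := by
      simpa [norm_smul, mul_left_comm] using
        (integrable_fderiv_apply_smul_newtonKernel μ hg supp w).norm.const_mul ‖v‖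
    refine tendsto_integral_filter_of_dominated_convergence _ ?_ ?_ dominating ?_
    · filter_upwards [self_mem_nhdsWithin] with ε hε
      have := (contDiff_regularizedNewtonKernel μ hε (n := 1)).continuous
      exact (by fun_prop : Continuous _).aestronglyMeasurable
    · filter_upwards [self_mem_nhdsWithin] with ε hε
      refine .of_forall fun z => ?_
      rw [norm_mul, mul_comm]
      gcongr
      exact (norm_inner_le_norm _ _).trans
        (by gcongr; exact norm_regularizedNewtonKernel_le μ hε.out.le z)
    · exact .of_forall fun z =>
        (tendsto_const_nhds.inner (tendsto_regularizedNewtonKernel μ z)).mul_const _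
  refine tendsto_nhds_unique (lim v w) ((lim w v).congr' ?_)
  filter_upwards [self_mem_nhdsWithin] with ε hε
  exact integral_inner_mul_fderiv_comm_of_symm μ (contDiff_regularizedNewtonKernel μ hε)
    (inner_fderiv_regularizedNewtonKernel_comm μ hε) hg supp w v

variable {f : E → ℝ}

lemma contDiff_newtonField (hf : ContDiff ℝ 1 f) (supp : HasCompactSupport f) :
    ContDiff ℝ 1 (newtonField μ f) :=
  supp.contDiff_convolution_left (.lsmul ℝ ℝ) hf (locallyIntegrable_newtonKernel μ)

lemma fderiv_newtonField_apply (hf : ContDiff ℝ 1 f) (supp : HasCompactSupport f) (x w : E) :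
    fderiv ℝ (newtonField μ f) x w =
      -∫ z, fderiv ℝ (fun z => f (x - z)) z w • newtonKernel μ z ∂μ := by
  have hasFDerivAt : HasFDerivAt (newtonField μ f) _ x :=
    supp.hasFDerivAt_convolution_left (.lsmul ℝ ℝ) hf (locallyIntegrable_newtonKernel μ) x
  have exists_left := supp.fderiv (𝕜 := ℝ) |>.convolutionExists_left
    (ContinuousLinearMap.precompL E (.lsmul ℝ ℝ)) (hf.continuous_fderiv one_ne_zero)
    (locallyIntegrable_newtonKernel μ)
  have fderiv_reflect : ∀ z, fderiv ℝ (fun z => f (x - z)) z w = -fderiv ℝ f (x - z) w := by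
    intro z
    have : HasFDerivAt (fun z => f (x - z)) _ z :=
      (hf.differentiable one_ne_zero _).hasFDerivAt.comp z ((hasFDerivAt_id z).const_sub x)
    simp [this.fderiv]
  rw [hasFDerivAt.fderiv, convolution_def, ContinuousLinearMap.integral_apply (exists_left x)]
  simp only [fderiv_reflect, neg_smul, integral_neg, neg_neg]
  rw [← integral_sub_left_eq_self _ μ x]
  simp

lemma inner_fderiv_newtonField_apply (hf : ContDiff ℝ 1 f) (supp : HasCompactSupport f)
    (x v w : E) :
    ⟪v, fderiv ℝ (newtonField μ f) x w⟫ =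
      -∫ z, ⟪v, newtonKernel μ z⟫ * fderiv ℝ (fun z => f (x - z)) z w ∂μ := by
  rw [fderiv_newtonField_apply μ hf supp, inner_neg_right, ← integral_inner]
  · simp only [inner_smul_right, mul_comm]
  · exact integrable_fderiv_apply_smul_newtonKernel μ (hf.comp (contDiff_const.sub contDiff_id))
      (supp.comp_homeomorph (.subLeft x)) w

lemma inner_fderiv_newtonField_comm (hf : ContDiff ℝ 1 f) (supp : HasCompactSupport f)
    (x v w : E) :
    ⟪v, fderiv ℝ (newtonField μ f) x w⟫ = ⟪w, fderiv ℝ (newtonField μ f) x v⟫ := by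
  rw [inner_fderiv_newtonField_apply μ hf supp, inner_fderiv_newtonField_apply μ hf supp]
  exact congrArg _ (integral_inner_newtonKernel_mul_fderiv_comm μ
    (hf.comp (contDiff_const.sub contDiff_id)) (supp.comp_homeomorph (.subLeft x)) v w)

lemma trace_fderiv_newtonField (hf : ContDiff ℝ 1 f) (supp : HasCompactSupport f) (x : E) :
    LinearMap.trace ℝ E (fderiv ℝ (newtonField μ f) x) = f x := by
  set g : E → ℝ := fun z => f (x - z)
  have hg : ContDiff ℝ 1 g := by fun_prop
  have hg_supp : HasCompactSupport g := supp.comp_homeomorph (.subLeft x)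
  let b := stdOrthonormalBasis ℝ E
  have integrable : ∀ i, Integrable (fun z => ⟪b i, newtonKernel μ z⟫ * fderiv ℝ g z (b i)) μ :=
    fun i => by
      simpa [inner_smul_right, mul_comm] using
        (integrable_fderiv_apply_smul_newtonKernel μ hg hg_supp (b i)).const_inner (𝕜 := ℝ) (b i)
  calc LinearMap.trace ℝ E (fderiv ℝ (newtonField μ f) x)
      = ∑ i, ⟪b i, fderiv ℝ (newtonField μ f) x (b i)⟫ := LinearMap.trace_eq_sum_inner _ b
    _ = -∫ z, ∑ i, ⟪b i, newtonKernel μ z⟫ * fderiv ℝ g z (b i) ∂μ := by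
        rw [integral_finsetSum _ fun i _ => integrable i, ← Finset.sum_neg_distrib]
        exact Finset.sum_congr rfl fun i _ => inner_fderiv_newtonField_apply μ hf supp x _ _
    _ = -∫ z, fderiv ℝ g z (newtonKernel μ z) ∂μ := by
        congr! 3 with z
        conv_rhs => rw [← b.sum_repr' (newtonKernel μ z), map_sum]
        simp only [map_smul, smul_eq_mul]
    _ = f x := by rw [integral_fderiv_apply_newtonKernel μ hg hg_supp, neg_neg]; simp [g]

end NewtonKernel

section TruncatedWeight

variable {E : Type*} [NormedAddCommGroup E] [InnerProductSpace ℝ E]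

lemma contDiff_japaneseBracket {n : WithTop ℕ∞} : ContDiff ℝ n (japaneseBracket : E → ℝ) :=
  (contDiff_const.add (contDiff_norm_sq ℝ)).sqrt fun x => by positivity

lemma norm_fderiv_japaneseBracket_le (x : E) : ‖fderiv ℝ japaneseBracket x‖ ≤ 1 :=
  norm_fderiv_le_of_lipschitz ℝ <| LipschitzWith.of_le_add fun x y => by
    simpa [dist_eq_norm] using japaneseBracket_le_add x y

/-- The power `sᵃ` smoothly cut off at `s = R`. -/
noncomputable def truncatedRpow (a R s : ℝ) : ℝ := s ^ a * Real.smoothTransition (1 - s / R)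

lemma contDiffAt_truncatedRpow (a R : ℝ) {s : ℝ} (hs : s ≠ 0) {n : ℕ∞} :
    ContDiffAt ℝ n (truncatedRpow a R) s :=
  (Real.contDiffAt_rpow_const_of_ne hs).mul
    (Real.smoothTransition.contDiff.contDiffAt.comp s (by fun_prop))

lemma truncatedRpow_nonneg (a R : ℝ) {s : ℝ} (hs : 0 ≤ s) : 0 ≤ truncatedRpow a R s :=
  mul_nonneg (Real.rpow_nonneg hs a) (Real.smoothTransition.nonneg _)

lemma truncatedRpow_le (a R : ℝ) {s : ℝ} (hs : 0 ≤ s) : truncatedRpow a R s ≤ s ^ a :=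
  mul_le_of_le_one_right (Real.rpow_nonneg hs a) (Real.smoothTransition.le_one _)

lemma truncatedRpow_eq_zero (a : ℝ) {R s : ℝ} (hR : 0 < R) (hs : R ≤ s) :
    truncatedRpow a R s = 0 := by
  rw [truncatedRpow, Real.smoothTransition.zero_of_nonpos, mul_zero]
  simpa using (one_le_div hR).2 hs

lemma tendsto_truncatedRpow (a s : ℝ) :
    Tendsto (fun n : ℕ => truncatedRpow a (n + 1) s) atTop (𝓝 (s ^ a)) := by
  have : Tendsto (fun n : ℕ => 1 - s * (1 / ((n : ℝ) + 1))) atTop (𝓝 1) := by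
    simpa using (tendsto_one_div_add_atTop_nhds_zero_nat.const_mul s).const_sub 1
  simpa [truncatedRpow, div_eq_mul_inv] using
    ((Real.smoothTransition.continuous.tendsto 1).comp this).const_mul (s ^ a)

lemma exists_abs_mul_deriv_smoothTransition_le :
    ∃ M ≥ 0, ∀ t ≥ 0, |t * deriv Real.smoothTransition (1 - t)| ≤ M := by
  have cont : Continuous fun t => t * deriv Real.smoothTransition (1 - t) := by
    have := Real.smoothTransition.contDiff (n := 1).continuous_deriv le_rfl
    fun_prop
  obtain ⟨M, hM⟩ := (isCompact_Icc (a := (0 : ℝ)) (b := 1)).exists_bound_of_continuousOn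
    cont.continuousOn
  refine ⟨M, (abs_nonneg _).trans (hM 0 (by simp)), fun t ht => ?_⟩
  rcases le_or_gt t 1 with le | gt
  · exact hM t ⟨ht, le⟩
  · have : Real.smoothTransition =ᶠ[𝓝 (1 - t)] 0 := by
      filter_upwards [Iio_mem_nhds (sub_neg.2 gt)] with r hr
      exact Real.smoothTransition.zero_of_nonpos hr.out.le
    rw [this.deriv_eq]
    simpa using (abs_nonneg _).trans (hM 0 (by simp))

lemma exists_abs_deriv_truncatedRpow_le (a : ℝ) :
    ∃ M ≥ 0, ∀ R > 0, ∀ s > 0, |deriv (truncatedRpow a R) s| ≤ M * s ^ (a - 1) := by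
  obtain ⟨M, M_nonneg, hM⟩ := exists_abs_mul_deriv_smoothTransition_le
  refine ⟨|a| + M, by positivity, fun R hR s hs => ?_⟩
  set σ := Real.smoothTransition
  have σ_deriv : HasDerivAt σ (deriv σ (1 - s / R)) (1 - s / R) :=
    (Real.smoothTransition.contDiff (n := 1).differentiable one_ne_zero _).hasDerivAt
  have deriv_eq : deriv (truncatedRpow a R) s =
      s ^ (a - 1) * (a * σ (1 - s / R) - s / R * deriv σ (1 - s / R)) := by
    have cutoff : HasDerivAt (fun s => σ (1 - s / R)) (deriv σ (1 - s / R) * -(1 / R)) s :=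
      σ_deriv.comp (h := fun s => 1 - s / R) s (((hasDerivAt_id' s).div_const R).const_sub 1)
    have : HasDerivAt (truncatedRpow a R) _ s :=
      (Real.hasDerivAt_rpow_const (.inl hs.ne')).mul cutoff
    rw [this.deriv, Real.rpow_sub_one hs.ne']
    field_simp
    ring
  have σ_le : |a * σ (1 - s / R)| ≤ |a| := by
    rw [abs_mul, abs_of_nonneg (Real.smoothTransition.nonneg _)]
    exact mul_le_of_le_one_right (abs_nonneg a) (Real.smoothTransition.le_one _)
  rw [deriv_eq, abs_mul, abs_of_nonneg (by positivity), mul_comm]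
  gcongr
  exact (abs_sub _ _).trans (add_le_add σ_le (hM _ (by positivity)))

lemma contDiff_truncatedRpow_japaneseBracket (a R : ℝ) {n : ℕ∞} :
    ContDiff ℝ n fun x : E => truncatedRpow a R (japaneseBracket x) :=
  contDiff_iff_contDiffAt.2 fun x =>
    (contDiffAt_truncatedRpow a R (japaneseBracket_pos x).ne').comp x
      contDiff_japaneseBracket.contDiffAt

lemma hasCompactSupport_truncatedRpow_japaneseBracket [FiniteDimensional ℝ E] (a : ℝ) {R : ℝ}
    (hR : 0 < R) : HasCompactSupport fun x : E => truncatedRpow a R (japaneseBracket x) :=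
  .intro (isCompact_closedBall 0 R) fun x hx => truncatedRpow_eq_zero a hR <|
    (by simpa using hx : R < ‖x‖).le.trans (norm_le_japaneseBracket x)

lemma exists_norm_fderiv_truncatedRpow_japaneseBracket_le (a : ℝ) :
    ∃ M ≥ 0, ∀ R > 0, ∀ x : E, ‖fderiv ℝ (fun x => truncatedRpow a R (japaneseBracket x)) x‖ ≤
      M * japaneseBracket x ^ (a - 1) := by
  obtain ⟨M, M_nonneg, hM⟩ := exists_abs_deriv_truncatedRpow_le a
  refine ⟨M, M_nonneg, fun R hR x => ?_⟩
  have pos := japaneseBracket_pos x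
  have : HasFDerivAt (fun x : E => truncatedRpow a R (japaneseBracket x)) _ x :=
    ((contDiffAt_truncatedRpow a R pos.ne' (n := 1)).differentiableAt one_ne_zero).hasDerivAt
      |>.comp_hasFDerivAt x (contDiff_japaneseBracket.differentiable one_ne_zero x).hasFDerivAt
  rw [this.fderiv, norm_smul]
  exact (mul_le_of_le_one_right (norm_nonneg _) (norm_fderiv_japaneseBracket_le x)).trans
    (hM R hR _ pos)

end TruncatedWeight

section WeightedEstimate

open Module
open scoped InnerProductSpace

lemma continuous_japaneseBracket_rpow {E : Type*} [NormedAddCommGroup E] (a : ℝ) :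
    Continuous fun x : E => japaneseBracket x ^ a :=
  continuous_japaneseBracket.rpow_const fun x => .inl (japaneseBracket_pos x).ne'

lemma memLp_japaneseBracket_rpow_mul {E : Type*} [NormedAddCommGroup E] [MeasurableSpace E]
    [OpensMeasurableSpace E] {μ : Measure E} [IsFiniteMeasureOnCompacts μ] {f : E → ℝ}
    (hf : Continuous f) (supp : HasCompactSupport f) (a : ℝ) (q : ℝ≥0∞) :
    MemLp (fun x => japaneseBracket x ^ a * f x) q μ :=
  ((continuous_japaneseBracket_rpow a).mul hf).memLp_of_hasCompactSupport supp.mul_left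

variable {E : Type*} [NormedAddCommGroup E] [InnerProductSpace ℝ E] [FiniteDimensional ℝ E]
  [MeasurableSpace E] [BorelSpace E] (μ : Measure E) [μ.IsAddHaarMeasure] {p : ℝ}

lemma exists_lpNorm_truncatedRpow_smul_fderiv_le (hp : 1 < p) (a : ℝ) :
    ∃ K ≥ 0, ∀ {u : E → E}, ContDiff ℝ 1 u →
      (∀ x v w, ⟪v, fderiv ℝ u x w⟫_ℝ = ⟪w, fderiv ℝ u x v⟫_ℝ) →
      MemLp (fun x => japaneseBracket x ^ (a - 1) * ‖u x‖) (.ofReal p) μ →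
      MemLp (fun x => japaneseBracket x ^ a * LinearMap.trace ℝ E (fderiv ℝ u x)) (.ofReal p) μ →
      ∀ R > 0, lpNorm (fun x => truncatedRpow a R (japaneseBracket x) • fderiv ℝ u x) (.ofReal p) μ
        ≤ K * (lpNorm (fun x => japaneseBracket x ^ (a - 1) * ‖u x‖) (.ofReal p) μ +
          lpNorm (fun x => japaneseBracket x ^ a * LinearMap.trace ℝ E (fderiv ℝ u x))
            (.ofReal p) μ) := by
  obtain ⟨K, K_nonneg, hK⟩ := exists_lpNorm_smul_fderiv_le μ hp
  obtain ⟨M, M_nonneg, hM⟩ := exists_norm_fderiv_truncatedRpow_japaneseBracket_le (E := E) a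
  refine ⟨K * (M + 1), by positivity, fun {u} hu symm memLp_u memLp_trace R hR => ?_⟩
  set N : E → ℝ := fun x => japaneseBracket x ^ (a - 1) * ‖u x‖
  set S : E → ℝ := fun x => japaneseBracket x ^ a * LinearMap.trace ℝ E (fderiv ℝ u x)
  set ζ : E → ℝ := fun x => truncatedRpow a R (japaneseBracket x)
  have fderiv_le : lpNorm (fun x => ‖fderiv ℝ ζ x‖ * ‖u x‖) (.ofReal p) μ ≤
      M * lpNorm N (.ofReal p) μ := by
    rw [← Real.norm_of_nonneg M_nonneg, ← coe_nnnorm, ← lpNorm_const_smul]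
    refine lpNorm_mono_real (memLp_u.const_smul M) fun x => ?_
    rw [norm_mul, norm_norm, norm_norm, Pi.smul_apply, smul_eq_mul, ← mul_assoc]
    gcongr
    exact hM R hR x
  have trace_le : lpNorm (fun x => ζ x * LinearMap.trace ℝ E (fderiv ℝ u x)) (.ofReal p) μ ≤
      lpNorm S (.ofReal p) μ := by
    refine (lpNorm_mono_real memLp_trace.norm fun x => ?_).trans_eq
      (lpNorm_norm memLp_trace.aestronglyMeasurable _)
    have pos := japaneseBracket_pos x
    rw [norm_mul, norm_mul, Real.norm_of_nonneg (truncatedRpow_nonneg a R pos.le),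
      Real.norm_of_nonneg (Real.rpow_nonneg pos.le a)]
    gcongr ?_ * _
    exact truncatedRpow_le a R pos.le
  have N_nonneg := lpNorm_nonneg (f := N) (p := .ofReal p) (μ := μ)
  have S_nonneg := lpNorm_nonneg (f := S) (p := .ofReal p) (μ := μ)
  calc lpNorm (ζ • fderiv ℝ u) (.ofReal p) μ
      ≤ K * (M * lpNorm N (.ofReal p) μ + lpNorm S (.ofReal p) μ) := by
        grw [hK hu symm (contDiff_truncatedRpow_japaneseBracket a R)
          (hasCompactSupport_truncatedRpow_japaneseBracket a hR), fderiv_le, trace_le]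
    _ ≤ K * (M + 1) * (lpNorm N (.ofReal p) μ + lpNorm S (.ofReal p) μ) := by
        rw [mul_assoc]
        gcongr
        nlinarith [mul_nonneg M_nonneg S_nonneg]

theorem exists_lpNorm_japaneseBracket_rpow_mul_norm_fderiv_le (hp : 1 < p) (a : ℝ) :
    ∃ K ≥ 0, ∀ {u : E → E}, ContDiff ℝ 1 u →
      (∀ x v w, ⟪v, fderiv ℝ u x w⟫_ℝ = ⟪w, fderiv ℝ u x v⟫_ℝ) →
      MemLp (fun x => japaneseBracket x ^ (a - 1) * ‖u x‖) (.ofReal p) μ →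
      MemLp (fun x => japaneseBracket x ^ a * LinearMap.trace ℝ E (fderiv ℝ u x)) (.ofReal p) μ →
      lpNorm (fun x => japaneseBracket x ^ a * ‖fderiv ℝ u x‖) (.ofReal p) μ
        ≤ K * (lpNorm (fun x => japaneseBracket x ^ (a - 1) * ‖u x‖) (.ofReal p) μ +
          lpNorm (fun x => japaneseBracket x ^ a * LinearMap.trace ℝ E (fderiv ℝ u x))
            (.ofReal p) μ) := by
  obtain ⟨K, K_nonneg, hK⟩ := exists_lpNorm_truncatedRpow_smul_fderiv_le μ hp a
  refine ⟨K, K_nonneg, fun {u} hu symm memLp_u memLp_trace => ?_⟩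
  have cont := hu.continuous_fderiv one_ne_zero
  set B := K * (lpNorm (fun x => japaneseBracket x ^ (a - 1) * ‖u x‖) (.ofReal p) μ +
    lpNorm (fun x => japaneseBracket x ^ a * LinearMap.trace ℝ E (fderiv ℝ u x)) (.ofReal p) μ)
  set G := fun (n : ℕ) (x : E) => truncatedRpow a (n + 1) (japaneseBracket x) • fderiv ℝ u x
  have G_memLp : ∀ n, MemLp (G n) (.ofReal p) μ := fun n =>
    ((contDiff_truncatedRpow_japaneseBracket a _ (n := 1)).continuous.smul
      cont).memLp_of_hasCompactSupport
      (hasCompactSupport_truncatedRpow_japaneseBracket a (by positivity)).smul_right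
  have eLpNorm_le : eLpNorm (fun x => japaneseBracket x ^ a • fderiv ℝ u x) (.ofReal p) μ ≤
      .ofReal B := by
    refine Lp.eLpNorm_le_of_ae_tendsto (.of_forall fun n => ?_) (fun n => (G_memLp n).1)
      (.of_forall fun x => (tendsto_truncatedRpow a _).smul_const _)
    rw [← ofReal_lpNorm (G_memLp n)]
    exact ENNReal.ofReal_le_ofReal (hK hu symm memLp_u memLp_trace _ (by positivity))
  calc lpNorm (fun x => japaneseBracket x ^ a * ‖fderiv ℝ u x‖) (.ofReal p) μ
      = lpNorm (fun x => ‖japaneseBracket x ^ a • fderiv ℝ u x‖) (.ofReal p) μ := by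
        congr! 2 with x
        have pos := japaneseBracket_pos x
        rw [norm_smul, Real.norm_of_nonneg (by positivity)]
    _ = (eLpNorm (fun x => japaneseBracket x ^ a • fderiv ℝ u x) (.ofReal p) μ).toReal := by
        have : AEStronglyMeasurable (fun x => japaneseBracket x ^ a • fderiv ℝ u x) μ :=
          ((continuous_japaneseBracket_rpow a).smul cont).aestronglyMeasurable
        rw [lpNorm_norm this, toReal_eLpNorm this]
    _ ≤ B := ENNReal.toReal_le_of_le_ofReal
        (mul_nonneg K_nonneg (add_nonneg lpNorm_nonneg lpNorm_nonneg)) eLpNorm_le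

variable {θ : ℝ}

lemma exists_eLpNorm_japaneseBracket_rpow_mul_norm_newtonField_le (hp : 1 < p) (hθ : 1 < θ)
    (hθ' : θ < finrank ℝ E) :
    ∃ C : ℝ≥0, ∀ {f : E → ℝ}, Measurable f →
      eLpNorm (fun x => japaneseBracket x ^ (θ - finrank ℝ E / p - 1) * ‖newtonField μ f x‖)
        (.ofReal p) μ ≤
      C * eLpNorm (fun x => japaneseBracket x ^ (θ - finrank ℝ E / p) * f x) (.ofReal p) μ := by
  have p_pos : 0 < p := one_pos.trans hp
  obtain ⟨C, hC⟩ := exists_lintegral_rieszPotential_le μ hp one_pos hθ hθ'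
  set c : ℝ≥0 := (finrank ℝ E * μ.real (Metric.ball (0 : E) 1))⁻¹.toNNReal
  refine ⟨c * C ^ (1 / p), fun {f} hf => ?_⟩
  have enorm_bracket_mul (s t : ℝ) (x : E) :
      ‖japaneseBracket x ^ s * t‖ₑ = .ofReal (japaneseBracket x ^ s) * ‖t‖ₑ := by
    rw [enorm_mul, Real.enorm_of_nonneg (Real.rpow_nonneg (japaneseBracket_pos x).le s)]
  simp only [eLpNorm_eq_lintegral_rpow_enorm_toReal (ENNReal.ofReal_pos.2 p_pos).ne'
    ENNReal.ofReal_ne_top, ENNReal.toReal_ofReal p_pos.le, enorm_bracket_mul, enorm_norm]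
  calc (∫⁻ x, (.ofReal (japaneseBracket x ^ (θ - finrank ℝ E / p - 1)) * ‖newtonField μ f x‖ₑ) ^ p
        ∂μ) ^ (1 / p)
      ≤ (∫⁻ x, (.ofReal (japaneseBracket x ^ (θ - finrank ℝ E / p - 1)) *
          (c * ∫⁻ y, .ofReal (‖x - y‖ ^ (1 - finrank ℝ E : ℝ)) * ‖f y‖ₑ ∂μ)) ^ p ∂μ) ^ (1 / p) := by
        gcongr with x
        exact enorm_newtonField_le μ f x
    _ = (c ^ p * ∫⁻ x, (.ofReal (japaneseBracket x ^ (θ - finrank ℝ E / p - 1)) *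
          ∫⁻ y, .ofReal (‖x - y‖ ^ (1 - finrank ℝ E : ℝ)) * ‖f y‖ₑ ∂μ) ^ p ∂μ) ^ (1 / p) := by
        rw [← lintegral_const_mul' _ _ (by finiteness)]
        simp only [mul_left_comm _ (c : ℝ≥0∞), ENNReal.mul_rpow_of_nonneg (c : ℝ≥0∞) _ p_pos.le]
    _ ≤ (c ^ p * (C * ∫⁻ x, (.ofReal (japaneseBracket x ^ (θ - finrank ℝ E / p)) * ‖f x‖ₑ) ^ p
          ∂μ)) ^ (1 / p) := by
        gcongr
        exact hC hf.enorm
    _ = _ := by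
        have inv_nonneg : 0 ≤ 1 / p := by positivity
        rw [ENNReal.mul_rpow_of_nonneg _ _ inv_nonneg, ENNReal.mul_rpow_of_nonneg _ _ inv_nonneg,
          one_div, ENNReal.rpow_rpow_inv p_pos.ne', ENNReal.coe_mul,
          ENNReal.coe_rpow_of_nonneg _ (inv_nonneg.trans_eq (one_div p)), mul_assoc]

variable [Nontrivial E]

lemma exists_lpNorm_japaneseBracket_rpow_mul_norm_newtonField_le (hp : 1 < p) (hθ : 1 < θ)
    (hθ' : θ < finrank ℝ E) :
    ∃ C ≥ 0, ∀ {f : E → ℝ}, ContDiff ℝ 1 f → HasCompactSupport f →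
      MemLp (fun x => japaneseBracket x ^ (θ - finrank ℝ E / p - 1) * ‖newtonField μ f x‖)
        (.ofReal p) μ ∧
      lpNorm (fun x => japaneseBracket x ^ (θ - finrank ℝ E / p - 1) * ‖newtonField μ f x‖)
        (.ofReal p) μ ≤
      C * lpNorm (fun x => japaneseBracket x ^ (θ - finrank ℝ E / p) * f x) (.ofReal p) μ := by
  obtain ⟨C, hC⟩ := exists_eLpNorm_japaneseBracket_rpow_mul_norm_newtonField_le μ hp hθ hθ'
  refine ⟨C, C.2, fun {f} hf supp => ?_⟩
  have memLp_f := memLp_japaneseBracket_rpow_mul hf.continuous supp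
    (θ - finrank ℝ E / p) (.ofReal p) (μ := μ)
  have memLp_u :
      MemLp (fun x => japaneseBracket x ^ (θ - finrank ℝ E / p - 1) * ‖newtonField μ f x‖)
        (.ofReal p) μ :=
    ⟨((continuous_japaneseBracket_rpow _).mul
        (contDiff_newtonField μ hf supp).continuous.norm).aestronglyMeasurable,
      (hC hf.continuous.measurable).trans_lt (ENNReal.mul_lt_top (by simp) memLp_f.2)⟩
  refine ⟨memLp_u, ?_⟩
  rw [← toReal_eLpNorm memLp_u.1, ← toReal_eLpNorm memLp_f.1, ← ENNReal.coe_toReal C,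
    ← ENNReal.toReal_mul]
  exact ENNReal.toReal_mono (ENNReal.mul_ne_top (by simp) memLp_f.2.ne)
    (hC hf.continuous.measurable)

theorem exists_lpNorm_newtonField_add_lpNorm_fderiv_le (hp : 1 < p) (hθ : 1 < θ)
    (hθ' : θ < finrank ℝ E) :
    ∃ C > 0, ∀ {f : E → ℝ}, ContDiff ℝ 1 f → HasCompactSupport f →
      lpNorm (fun x => japaneseBracket x ^ (θ - finrank ℝ E / p - 1) * ‖newtonField μ f x‖)
        (.ofReal p) μ +
      lpNorm (fun x => japaneseBracket x ^ (θ - finrank ℝ E / p) * ‖fderiv ℝ (newtonField μ f) x‖)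
        (.ofReal p) μ ≤
      C * lpNorm (fun x => japaneseBracket x ^ (θ - finrank ℝ E / p) * f x) (.ofReal p) μ := by
  obtain ⟨C, C_nonneg, hC⟩ :=
    exists_lpNorm_japaneseBracket_rpow_mul_norm_newtonField_le μ hp hθ hθ'
  obtain ⟨K, K_nonneg, hK⟩ := exists_lpNorm_japaneseBracket_rpow_mul_norm_fderiv_le μ hp
    (θ - finrank ℝ E / p)
  refine ⟨C + K * (C + 1) + 1, by positivity, fun {f} hf supp => ?_⟩
  obtain ⟨memLp_u, u_le⟩ := hC hf supp
  have fderiv_le := hK (contDiff_newtonField μ hf supp) (inner_fderiv_newtonField_comm μ hf supp)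
    memLp_u
  simp only [trace_fderiv_newtonField μ hf supp] at fderiv_le
  grw [fderiv_le (memLp_japaneseBracket_rpow_mul hf.continuous supp _ _), u_le]
  linarith [lpNorm_nonneg (f := fun x => japaneseBracket x ^ (θ - finrank ℝ E / p) * f x)
    (p := .ofReal p) (μ := μ)]

end WeightedEstimate

theorem stmt15_general {E : Type*} [NormedAddCommGroup E] [InnerProductSpace ℝ E]
    [FiniteDimensional ℝ E] [MeasurableSpace E] [BorelSpace E] (μ : Measure E) [μ.IsAddHaarMeasure]
    (p θ : ℝ) (hp : 1 < p) (hθ : θ ∈ Set.Ioo (1 : ℝ) (Module.finrank ℝ E))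
    (ω : ℝ) (hω : ω = (μ (Metric.ball 0 1)).toReal)
    (w : E → ℝ) (hw : ∀ x, w x = Real.sqrt (1 + ‖x‖ ^ 2)) :
    ∃ C > 0, ∀ f : E → ℝ, ContDiff ℝ 1 f → HasCompactSupport f → ∀ u : E → E,
      (∀ x, u x = ∫ y, (f y / (Module.finrank ℝ E * ω * ‖x - y‖ ^ Module.finrank ℝ E)) • (x - y)
        ∂μ) →
      (∫ x, (w x ^ (θ - Module.finrank ℝ E / p - 1) * ‖u x‖) ^ p ∂μ) ^ (1 / p) +
          (∫ x, (w x ^ (θ - Module.finrank ℝ E / p) * ‖fderiv ℝ u x‖) ^ p ∂μ) ^ (1 / p)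
        ≤ C * (∫ x, (w x ^ (θ - Module.finrank ℝ E / p) * |f x|) ^ p ∂μ) ^ (1 / p) := by
  have : Nontrivial E :=
    Module.finrank_pos_iff.1 (Nat.cast_pos.1 (by linarith [hθ.1, hθ.2] : (0 : ℝ) < _))
  obtain ⟨C, C_pos, hC⟩ := exists_lpNorm_newtonField_add_lpNorm_fderiv_le μ hp hθ.1 hθ.2
  refine ⟨C, C_pos, fun f hf supp u hu => ?_⟩
  obtain rfl : w = japaneseBracket := funext hw
  obtain rfl : u = newtonField μ f := funext fun x => by
    simp only [hu, hω, newtonField, newtonKernel, smul_smul, div_eq_mul_inv, Measure.real]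
  have cont := contDiff_newtonField μ hf supp
  have lpNorm_eq (a : ℝ) {g : E → ℝ} (hg : Continuous g) :
      lpNorm (fun x => japaneseBracket x ^ a * g x) (.ofReal p) μ =
        (∫ x, (japaneseBracket x ^ a * |g x|) ^ p ∂μ) ^ (1 / p) := by
    have : Continuous fun x => japaneseBracket x ^ a * g x :=
      (continuous_japaneseBracket_rpow a).mul hg
    rw [lpNorm_ofReal_eq_integral (one_pos.trans hp) this.aestronglyMeasurable]
    simp only [abs_mul, abs_of_nonneg (Real.rpow_nonneg (japaneseBracket_pos _).le a)]
  simpa only [lpNorm_eq _ cont.continuous.norm,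
    lpNorm_eq _ (cont.continuous_fderiv one_ne_zero).norm, lpNorm_eq _ hf.continuous, abs_norm]
    using hC hf supp

theorem stmt15 (d : ℕ) (hd : 2 ≤ d) (p θ : ℝ) (hp : 1 < p)
    (hθ : θ ∈ Set.Ioo (1 : ℝ) (d : ℝ))
    -- `ωd` is the volume of the unit ball in `ℝ^d`
    (ωd : ℝ) (hωd : ωd = (volume (Metric.ball (0 : EuclideanSpace ℝ (Fin d)) 1)).toReal)
    (w : EuclideanSpace ℝ (Fin d) → ℝ)
    (hw : ∀ x, w x = Real.sqrt (1 + ‖x‖ ^ 2)) :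
    ∃ C > 0, ∀ f : EuclideanSpace ℝ (Fin d) → ℝ,
      ContDiff ℝ (⊤ : ℕ∞) f → HasCompactSupport f →
      ∀ u : EuclideanSpace ℝ (Fin d) → EuclideanSpace ℝ (Fin d),
        -- `u = ∇Γ ∗ f`, with `∇Γ(x) = x/(d ω_d |x|^d)`
        (∀ x, u x = ∫ y, (f y / ((d : ℝ) * ωd * ‖x - y‖ ^ d)) • (x - y)) →
        (∫ x, (w x ^ (θ - (d : ℝ) / p - 1) * ‖u x‖) ^ p) ^ (1 / p) +
            (∫ x, (w x ^ (θ - (d : ℝ) / p) * ‖fderiv ℝ u x‖) ^ p) ^ (1 / p)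
          ≤ C * (∫ x, (w x ^ (θ - (d : ℝ) / p) * |f x|) ^ p) ^ (1 / p) := by
  rw [← finrank_euclideanSpace_fin (𝕜 := ℝ) (n := d)] at hθ
  obtain ⟨C, C_pos, hC⟩ := stmt15_general volume p θ hp hθ ωd hωd w hw
  exact ⟨C, C_pos, fun f hf => by
    simpa only [finrank_euclideanSpace_fin] using hC f (hf.of_le (by exact_mod_cast le_top))⟩
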